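/- Let u : ℕ → {1,2,3} be a (right-sided) non-degenerate 3iet word with parameters ε, l, c, i.e., u(n) = 1, 2 or 3 according as Tⁿ(0) ∈ [c, c+l−1+ε), [c+l−1+ε, c+ε) or [c+ε, c+l), where ε ∈ (0,1) is irrational, max(ε,1−ε) < l < 1, c ≤ 0 < c+l and l ∉ ℤ[ε]. Let σ₀₁ be the morphism from words over {1,2,3} to words over {0,1} determined by 1 ↦ 0, 2 ↦ 01, 3 ↦ 1, and σ₁₀ the morphism determined by 1 ↦ 0, 2 ↦ 10, 3 ↦ 1, each applied letterwise and extended to infinite words by concatenation. Then u is a fixed point of some primitive substitution over {1,2,3} if and only if both infinite words σ₀₁(u) and σ₁₀(u) are fixed points of substitutions over {0,1} different from the identity. -/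

import Mathlib

/-- The set `ℤ[ε] = {a + bε : a, b ∈ ℤ}`. -/
def Zbr (ε : ℝ) : Set ℝ := {x | ∃ a b : ℤ, x = (a : ℝ) + (b : ℝ) * ε}

/-- The exchange of three intervals on `[c, c+l)` with parameters `ε, l, c`. -/
noncomputable def T3 (ε l c : ℝ) (x : ℝ) : ℝ :=
  if x < c + l - 1 + ε then x + 1 - ε
  else if x < c + ε then x + 1 - 2 * ε
  else x - ε

/-- The letter (1, 2 or 3, coded as 0, 1, 2 in `Fin 3`) coding the position of `x`. -/
noncomputable def letter3 (ε l c : ℝ) (x : ℝ) : Fin 3 :=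
  if x < c + l - 1 + ε then 0 else if x < c + ε then 1 else 2

/-- The right-sided 3iet word with parameters `ε, l, c`, coding the orbit of `0`. -/
noncomputable def threeIetWordN (ε l c : ℝ) (n : ℕ) : Fin 3 :=
  letter3 ε l c ((T3 ε l c)^[n] 0)

/-- The extension of a substitution `φ` to finite words, by concatenation. -/
def substWord {A : Type*} (φ : A → List A) (w : List A) : List A := w.flatMap φ

/-- A substitution is primitive if some power of it maps every letter to a word
containing all letters. -/
def IsPrimitiveSubst {A : Type*} (φ : A → List A) : Prop :=
  ∃ n : ℕ, 1 ≤ n ∧ ∀ a b : A, b ∈ (substWord φ)^[n] [a]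

/-- A right-infinite word `s : ℕ → A` is a fixed point of the substitution `φ`. -/
def IsFixedPointSubst {A : Type*} (φ : A → List A) (s : ℕ → A) : Prop :=
  ∃ k : ℕ → ℕ, StrictMono k ∧ k 0 = 0 ∧
    (∀ n, k (n + 1) = k n + (φ (s n)).length) ∧
    ∀ n, ∀ i, (h : i < (φ (s n)).length) → s (k n + i) = (φ (s n)).get ⟨i, h⟩

/-- `v : ℕ → B` is the image of the right-infinite word `u : ℕ → A` under the
letter-to-word morphism `σ`, i.e. `v = σ(u(0))σ(u(1))σ(u(2))⋯`. -/
def IsConcatImage {A B : Type*} (σ : A → List B) (u : ℕ → A) (v : ℕ → B) : Prop :=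
  ∃ k : ℕ → ℕ, k 0 = 0 ∧ (∀ n, k (n + 1) = k n + (σ (u n)).length) ∧
    ∀ n, ∀ i, (h : i < (σ (u n)).length) → v (k n + i) = (σ (u n)).get ⟨i, h⟩

/-- The morphism `σ₀₁ : 1 ↦ 0, 2 ↦ 01, 3 ↦ 1` (letters 1,2,3 coded as 0,1,2). -/
def sigma01 : Fin 3 → List (Fin 2) := ![[0], [0, 1], [1]]

/-- The morphism `σ₁₀ : 1 ↦ 0, 2 ↦ 10, 3 ↦ 1` (letters 1,2,3 coded as 0,1,2). -/
def sigma10 : Fin 3 → List (Fin 2) := ![[0], [1, 0], [1]]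

/-!
The map `T` translates points by elements of `ℤ[ε] ≅ ℤ²`, so the orbit of `0` is recorded by
vectors of `ℤ²`. If the word `u` of the orbit is fixed by a substitution other than the identity,
then the vectors at the cuts between consecutive images of letters arise from those of the whole
orbit by a linear map `S` of `ℤ²`: the vector of the image of the middle letter has to be the sum
of the two others, because the visits of an irrational rotation to an arc whose length is not in
`ℤ[ε]` have unbounded discrepancy (Kesten). After squaring if necessary, `S` multiplies positions
by a ratio `r ∈ (0, 1)` and expands a second linear form, positive along the orbit, so that this
*height* plays the role of time.

Conversely, `S` comes from a substitution fixing the word as soon as any two points of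
`r [c, c + l)` that come from the same one of the three intervals follow the same path until they
return. By continuity, two paths can only separate when a point between them lands on `c` or
`c + l`, so the condition on `S` splits into one condition for each end point. For `σ₀₁(u)`, which
codes the exchange of two intervals on `[c, c + 1)`, the two conditions are equivalent to each
other and, up to replacing `S` by `S²`, to the condition at `c` for `u`; for `σ₁₀(u)`, which codes
the exchange on `[c + l - 1, c + l)`, they amount to the condition at `c + l` for `u`. Finally, if
the two Sturmian words have different maps `S`, the ratios are units of a quadratic order, hence
have a common power, and powers of the two maps coincide.
-/

namespace ThreeIet

open Function Set Filter Topology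

section Words

variable {A B : Type*}

/-- The word `s` is self-similar along `k` when it is cut at the positions `k n` into nonempty
blocks, the `n`-th of which depends only on the letter `s n`. This is the property of being fixed by
a substitution, with the substitution itself eliminated in favour of the sequence of cuts. -/
structure IsSelfSimilar (s : ℕ → A) (k : ℕ → ℕ) : Prop where
  zero : k 0 = 0
  strictMono : StrictMono k
  length_eq {n m : ℕ} : s n = s m → k (n + 1) - k n = k (m + 1) - k m
  letter_eq {n m : ℕ} : s n = s m → ∀ i < k (n + 1) - k n, s (k n + i) = s (k m + i)

namespace IsSelfSimilar

variable {s : ℕ → A} {j k : ℕ → ℕ}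

protected theorem id (s : ℕ → A) : IsSelfSimilar s id where
  zero := rfl
  strictMono := strictMono_id
  length_eq _ := by simp
  letter_eq hnm i hi := by
    obtain rfl : i = 0 := by simpa using hi
    simpa using hnm

theorem congr {t : ℕ → B} (h : IsSelfSimilar s k) (hst : ∀ n m, s n = s m ↔ t n = t m) :
    IsSelfSimilar t k where
  zero := h.zero
  strictMono := h.strictMono
  length_eq hnm := h.length_eq ((hst _ _).2 hnm)
  letter_eq hnm i hi := (hst _ _).1 (h.letter_eq ((hst _ _).2 hnm) i hi)

theorem factor_eq (h : IsSelfSimilar s k) {a b : ℕ} :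
    ∀ {L : ℕ}, (∀ i < L, s (a + i) = s (b + i)) →
      k (a + L) - k a = k (b + L) - k b ∧ ∀ i < k (a + L) - k a, s (k a + i) = s (k b + i)
  | 0, _ => by simp
  | L + 1, hab => by
    obtain ⟨hlen, hletter⟩ := h.factor_eq fun i hi => hab i (hi.trans L.lt_succ_self)
    have hlen' := h.length_eq (hab L L.lt_succ_self)
    have ha := h.strictMono.monotone (Nat.le_add_right a L)
    have hb := h.strictMono.monotone (Nat.le_add_right b L)
    have ha' := h.strictMono (Nat.lt_succ_self (a + L))
    have hb' := h.strictMono (Nat.lt_succ_self (b + L))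
    simp only [Nat.succ_eq_add_one] at ha' hb'
    simp only [← add_assoc]
    refine ⟨by omega, fun i hi => ?_⟩
    rcases lt_or_ge i (k (a + L) - k a) with hi' | hi'
    · exact hletter i hi'
    · have := h.letter_eq (hab L L.lt_succ_self) (i - (k (a + L) - k a)) (by omega)
      rwa [show k (a + L) + (i - (k (a + L) - k a)) = k a + i by omega,
        show k (b + L) + (i - (k (a + L) - k a)) = k b + i by omega] at this

theorem comp (hk : IsSelfSimilar s k) (hj : IsSelfSimilar s j) : IsSelfSimilar s (k ∘ j) := by
  have hj' (n : ℕ) : j n + (j (n + 1) - j n) = j (n + 1) :=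
    Nat.add_sub_cancel' (hj.strictMono.monotone n.le_succ)
  have hfactor {n m : ℕ} (hnm : s n = s m) := hk.factor_eq (hj.letter_eq hnm)
  refine ⟨by simp [hj.zero, hk.zero], hk.strictMono.comp hj.strictMono, fun {n m} hnm => ?_,
    fun {n m} hnm i hi => (hfactor hnm).2 i (by rwa [hj'])⟩
  have := (hfactor hnm).1
  rwa [hj', hj.length_eq hnm, hj'] at this

theorem iterate (h : IsSelfSimilar s k) : ∀ r : ℕ, IsSelfSimilar s k^[r]
  | 0 => .id s
  | r + 1 => (h.iterate r).comp h

end IsSelfSimilar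

/-- The substitution sending each letter `a` to the block of `s` between the cuts `k n` and
`k (n + 1)`, where `n` is some occurrence of `a` in `s`. -/
noncomputable def blockSubst (s : ℕ → A) (k : ℕ → ℕ) (hs : Surjective s) (a : A) : List A :=
  List.ofFn fun i : Fin (k (surjInv hs a + 1) - k (surjInv hs a)) => s (k (surjInv hs a) + i)

section blockSubst

variable {s : ℕ → A} {k : ℕ → ℕ} {hs : Surjective s}

theorem blockSubst_ne_nil (hk : StrictMono k) (a : A) : blockSubst s k hs a ≠ [] := by
  simpa only [blockSubst, ne_eq, List.ofFn_eq_nil_iff] using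
    (Nat.sub_pos_of_lt (hk (surjInv hs a).lt_succ_self)).ne'

theorem isFixedPointSubst_blockSubst (h : IsSelfSimilar s k) :
    IsFixedPointSubst (blockSubst s k hs) s := by
  have hlen (n : ℕ) : (blockSubst s k hs (s n)).length = k (n + 1) - k n := by
    simp [blockSubst, h.length_eq (surjInv_eq hs (s n))]
  refine ⟨k, h.strictMono, h.zero, fun n => ?_, fun n i hi => ?_⟩
  · rw [hlen, Nat.add_sub_cancel' (h.strictMono.monotone n.le_succ)]
  · rw [hlen] at hi
    simp [blockSubst, h.letter_eq (surjInv_eq hs (s n)).symm i hi]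

theorem isPrimitiveSubst_blockSubst
    (h : ∀ n b, ∃ i < k (n + 1) - k n, s (k n + i) = b) : IsPrimitiveSubst (blockSubst s k hs) := by
  refine ⟨1, le_rfl, fun a b => ?_⟩
  obtain ⟨i, hi, rfl⟩ := h (surjInv hs a) b
  simpa [substWord, blockSubst, List.mem_ofFn] using ⟨⟨i, hi⟩, rfl⟩

end blockSubst

theorem exists_nontrivial_subst_iff {s : ℕ → A} (hs : Surjective s) :
    (∃ φ : A → List A, (∀ a, φ a ≠ []) ∧ (¬ ∀ a, φ a = [a]) ∧ IsFixedPointSubst φ s) ↔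
      ∃ k, IsSelfSimilar s k ∧ k ≠ id := by
  constructor
  · rintro ⟨φ, -, hφ, k, hmono, hzero, hlen, hletter⟩
    have hsub (n : ℕ) : k (n + 1) - k n = (φ (s n)).length := by rw [hlen]; omega
    refine ⟨k, ⟨hzero, hmono, fun hnm => by rw [hsub, hsub, hnm], fun {n m} hnm i hi => ?_⟩, ?_⟩
    · rw [hsub] at hi
      rw [hletter n i hi, hletter m i (hnm ▸ hi)]
      simp only [List.get_eq_getElem, hnm]
    · rintro rfl
      refine hφ fun a => ?_
      obtain ⟨n, rfl⟩ := hs a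
      obtain ⟨b, hb⟩ : ∃ b, φ (s n) = [b] :=
        List.length_eq_one_iff.1 (by simpa using (hlen n).symm)
      have := hletter n 0 (by simp [hb])
      simp only [hb, id, add_zero, List.get_eq_getElem, List.getElem_cons_zero] at this
      rw [hb, this]
  · rintro ⟨k, hk, hne⟩
    refine ⟨blockSubst s k hs, blockSubst_ne_nil hk.strictMono, fun hid => hne ?_,
      isFixedPointSubst_blockSubst hk⟩
    have hlen (n : ℕ) : k (n + 1) - k n = 1 := by
      simpa [blockSubst, hk.length_eq (surjInv_eq hs (s n))] using congrArg List.length (hid (s n))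
    funext n
    induction n with
    | zero => exact hk.zero
    | succ n ih => simp only [id] at ih ⊢; have := hlen n; omega

theorem IsPrimitiveSubst.not_forall_eq_singleton [Nontrivial A] {φ : A → List A}
    (h : IsPrimitiveSubst φ) : ¬ ∀ a, φ a = [a] := by
  intro hφ
  obtain ⟨n, -, hn⟩ := h
  obtain ⟨a, b, hab⟩ := exists_pair_ne A
  have hfix : substWord φ [a] = [a] := by simp [substWord, hφ]
  have := hn a b
  rw [iterate_fixed hfix, List.mem_singleton] at this
  exact hab this.symm

theorem IsConcatImage.unique {σ : A → List B} (hσ : ∀ a, σ a ≠ []) {u : ℕ → A} {v w : ℕ → B}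
    (hv : IsConcatImage σ u v) (hw : IsConcatImage σ u w) : v = w := by
  obtain ⟨k, hk0, hk, hv⟩ := hv
  obtain ⟨j, hj0, hj, hw⟩ := hw
  obtain rfl : k = j := by
    funext n
    induction n with
    | zero => rw [hk0, hj0]
    | succ n ih => rw [hk, hj, ih]
  have hkmono : StrictMono k :=
    strictMono_nat_of_lt_succ fun n => by
      rw [hk]; exact Nat.lt_add_of_pos_right (List.length_pos_iff.2 (hσ _))
  have hprefix : ∀ n, ∀ i < k n, v i = w i := by
    intro n
    induction n with
    | zero => simp [hk0]
    | succ n ih =>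
      intro i hi
      rcases lt_or_ge i (k n) with hi' | hi'
      · exact ih i hi'
      · obtain ⟨i, rfl⟩ := Nat.exists_eq_add_of_le hi'
        have hi'' : i < (σ (u n)).length := by rw [hk] at hi; omega
        rw [hv n i hi'', hw n i hi'']
  funext i
  exact hprefix (i + 1) i (hkmono.le_apply)

theorem IsConcatImage.forall_iff {σ : A → List B} (hσ : ∀ a, σ a ≠ []) {u : ℕ → A} {w : ℕ → B}
    (hw : IsConcatImage σ u w) {P : (ℕ → B) → Prop} :
    (∀ v, IsConcatImage σ u v → P v) ↔ P w :=
  ⟨fun h => h w hw, fun h _ hv => IsConcatImage.unique hσ hw hv ▸ h⟩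

/-- The `S`-orbit of a point, coded by `q`, starts with a given word and then arrives at a given
point. -/
def ReadsWord {X : Type*} (S : X → X) (q : X → B) : List B → X → X → Prop
  | [], x, y => x = y
  | b :: w, x, y => q x = b ∧ ReadsWord S q w (S x) y

namespace ReadsWord

variable {X : Type*} {S : X → X} {q : X → B} {w : List B} {x y : X}

theorem iterate_length_eq (h : ReadsWord S q w x y) : S^[w.length] x = y := by
  induction w generalizing x with
  | nil => exact h
  | cons b w ih => exact ih h.2

theorem apply_iterate_eq_get (h : ReadsWord S q w x y) (i : ℕ) (hi : i < w.length) :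
    q (S^[i] x) = w.get ⟨i, hi⟩ := by
  induction w generalizing x i with
  | nil => exact absurd hi i.not_lt_zero
  | cons b w ih =>
    cases i with
    | zero => exact h.1
    | succ i => exact ih h.2 i (Nat.lt_of_succ_lt_succ hi)

end ReadsWord

theorem isConcatImage_of_induced {X : Type*} {T S : X → X} {p : X → A} {q : X → B}
    {σ : A → List B} {I : Set X} (hT : MapsTo T I I)
    (hS : ∀ x ∈ I, ReadsWord S q (σ (p x)) x (T x)) {x : X} (hx : x ∈ I) :
    IsConcatImage σ (fun n => p (T^[n] x)) (fun n => q (S^[n] x)) := by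
  set k : ℕ → ℕ := fun n => ∑ m ∈ Finset.range n, (σ (p (T^[m] x))).length with hk
  have hk_succ (n : ℕ) : k (n + 1) = k n + (σ (p (T^[n] x))).length := Finset.sum_range_succ ..
  have hread (n : ℕ) := hS _ (hT.iterate n hx)
  have hSk : ∀ n, S^[k n] x = T^[n] x := by
    intro n
    induction n with
    | zero => simp [hk]
    | succ n ih =>
      rw [hk_succ, add_comm, iterate_add_apply, ih, (hread n).iterate_length_eq,
        iterate_succ_apply']
  refine ⟨k, by simp [hk], hk_succ, fun n i hi => ?_⟩
  simp only [add_comm (k n) i, iterate_add_apply, hSk]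
  exact (hread n).apply_iterate_eq_get i hi

end Words

section Lattice

/-- The real linear form `(i, j) ↦ i a + j b` on `ℤ²`. Forms with positive coefficients serve as
heights, which order the points of an orbit by time. -/
def linearForm (a b : ℝ) : ℤ × ℤ →+ ℝ :=
  AddMonoidHom.mk' (fun z => z.1 * a + z.2 * b) fun z w => by
    push_cast [Prod.fst_add, Prod.snd_add]; ring

@[simp]
theorem linearForm_apply (a b : ℝ) (z : ℤ × ℤ) : linearForm a b z = z.1 * a + z.2 * b := rfl

/-- The translation of the line coded by a vector of `ℤ²`: the basis vectors stand for the
translations by `1 - ε` and `-ε` of which the branches of `T3` are made. -/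
def val (ε : ℝ) : ℤ × ℤ →+ ℝ := linearForm (1 - ε) (-ε)

theorem val_apply (ε : ℝ) (z : ℤ × ℤ) : val ε z = z.1 * (1 - ε) + z.2 * (-ε) := rfl

/-- The group `ℤ[ε]`, as the range of `val`. -/
def lattice (ε : ℝ) : AddSubgroup ℝ := (val ε).range

variable {ε : ℝ}

theorem val_mem_lattice (z : ℤ × ℤ) : val ε z ∈ lattice ε := ⟨z, rfl⟩

theorem mem_lattice_iff {x : ℝ} : x ∈ lattice ε ↔ x ∈ Zbr ε := by
  constructor
  · rintro ⟨z, rfl⟩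
    exact ⟨z.1, -(z.1 + z.2), by rw [val_apply]; push_cast; ring⟩
  · rintro ⟨a, b, rfl⟩
    exact ⟨(a, -(a + b)), by rw [val_apply]; push_cast; ring⟩

theorem intCast_add_mul_mem_lattice (a b : ℤ) : (a + b * ε : ℝ) ∈ lattice ε :=
  mem_lattice_iff.2 ⟨a, b, rfl⟩

theorem one_mem_lattice : (1 : ℝ) ∈ lattice ε := by
  simpa using intCast_add_mul_mem_lattice (ε := ε) 1 0

theorem lattice_one_sub (ε : ℝ) : lattice (1 - ε) = lattice ε := by
  have hle (δ : ℝ) : lattice (1 - δ) ≤ lattice δ := by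
    rintro _ ⟨z, rfl⟩
    exact ⟨-z.swap, by simp [val_apply]; ring⟩
  exact (hle ε).antisymm (by simpa using hle (1 - ε))

theorem val_injective (hε : Irrational ε) : Injective (val ε) := by
  refine (injective_iff_map_eq_zero _).2 fun z hz => ?_
  have hsum : z.1 + z.2 = 0 := by
    by_contra h
    refine (hε.intCast_mul h).ne_int z.1 ?_
    rw [val_apply] at hz
    push_cast
    linarith
  have hfst : (z.1 : ℝ) = 0 := by
    have : (z.2 : ℝ) = -z.1 := by exact_mod_cast eq_neg_of_add_eq_zero_right hsum
    rw [val_apply, this] at hz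
    linarith
  have : z.1 = 0 := by exact_mod_cast hfst
  ext <;> simp <;> omega

theorem exists_val_mem_Ioo (hε : Irrational ε) {p q : ℝ} (hpq : p < q) :
    ∃ z, val ε z ∈ Ioo p q := by
  have hdense : Dense (AddSubgroup.closure {1, ε} : Set ℝ) := by
    rw [dense_addSubgroupClosure_pair_iff]
    simpa using hε.inv
  obtain ⟨x, hx, hpx, hxq⟩ := hdense.exists_between hpq
  obtain ⟨a, b, rfl⟩ := AddSubgroup.mem_closure_pair.1 hx
  obtain ⟨z, hz⟩ := intCast_add_mul_mem_lattice (ε := ε) a b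
  exact ⟨z, by rw [hz]; simpa using And.intro hpx hxq⟩

theorem exists_mem_Ioo_and_lt {G : Type*} [AddCommGroup G] (f h : G →+ ℝ) {e w : G} {p q : ℝ}
    (hfe : f e < 0) (hhe : 0 < h e) (hfw : f w ∈ Ioo 0 (q - p)) (hhw : 0 ≤ h w) (K : ℝ) :
    ∃ z, f z ∈ Ioo p q ∧ K < h z := by
  obtain ⟨m, hm⟩ := exists_nat_gt (max (-p / -f e) (K / h e))
  obtain ⟨hmf, hmh⟩ := max_lt_iff.1 hm
  rw [div_lt_iff₀ (by linarith)] at hmf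
  rw [div_lt_iff₀ hhe] at hmh
  obtain ⟨n, ⟨hpn, hnq⟩, -⟩ := existsUnique_add_zsmul_mem_Ioc hfw.1 (m * f e) p
  have hn : (0 : ℝ) < n := by
    rw [zsmul_eq_mul] at hpn
    exact pos_of_mul_pos_left (by linarith) hfw.1.le
  refine ⟨m • e + n • w, ⟨?_, ?_⟩, ?_⟩
  · simpa using hpn
  · have := hfw.2
    simp only [map_add, map_nsmul, map_zsmul, nsmul_eq_mul]
    linarith
  · have : 0 ≤ n * h w := by positivity
    simp only [map_add, map_nsmul, map_zsmul, nsmul_eq_mul, zsmul_eq_mul]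
    linarith

theorem exists_val_mem_Ioo_and_lt_height (hε : Irrational ε) (hε₀ : 0 < ε) (hε₁ : ε < 1)
    {g₀ g₁ : ℝ} (hg₀ : 0 < g₀) (hg₁ : 0 < g₁) {p q : ℝ} (hpq : p < q) (K : ℝ) :
    ∃ z, val ε z ∈ Ioo p q ∧ K < linearForm g₀ g₁ z := by
  obtain ⟨w, hw⟩ := exists_val_mem_Ioo hε (sub_pos.2 hpq)
  rcases le_total 0 (linearForm g₀ g₁ w) with hhw | hhw
  · exact exists_mem_Ioo_and_lt (val ε) (linearForm g₀ g₁) (e := (0, 1)) (by simpa [val_apply])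
      (by simpa) hw hhw K
  · obtain ⟨z, hz, hK⟩ := exists_mem_Ioo_and_lt (p := -q) (q := -p) (-val ε) (linearForm g₀ g₁)
      (e := (1, 0)) (w := -w) (by simpa [val_apply] using hε₁) (by simpa)
      (by rwa [AddMonoidHom.neg_apply, map_neg, neg_neg, neg_sub_neg])
      (by rw [map_neg]; linarith) K
    exact ⟨z, by simpa using neg_mem_Ioo_iff.1 hz, hK⟩

end Lattice

section Exchange

/-- The conditions on the parameters `ε, l` of `T3` (on any interval `[c, c + l)`), with the
degenerate length `l = 1` allowed: `T3 ε 1 c` is the exchange of two intervals coding Sturmian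
words. -/
structure IsExchange (ε l : ℝ) : Prop where
  irrational : Irrational ε
  pos : 0 < ε
  lt_one : ε < 1
  lt_length : ε < l
  one_sub_lt_length : 1 - ε < l
  length_le_one : l ≤ 1

theorem IsExchange.one_sub {ε l : ℝ} (h : IsExchange ε l) : IsExchange (1 - ε) l where
  irrational := by simpa using h.irrational.natCast_sub 1
  pos := sub_pos.2 h.lt_one
  lt_one := sub_lt_self _ h.pos
  lt_length := h.one_sub_lt_length
  one_sub_lt_length := by simpa using h.lt_length
  length_le_one := h.length_le_one

/-- The vector of `ℤ²` by which `T3` translates the points of each of the three intervals. -/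
def step : Fin 3 → ℤ × ℤ := ![(1, 0), (1, 1), (0, 1)]

theorem step_injective : Injective step := by decide

/-- The vector of `ℤ²` by which the first `n` steps of `T3` translate the point `x`. -/
noncomputable def displacement (ε l c x : ℝ) (n : ℕ) : ℤ × ℤ :=
  ∑ m ∈ Finset.range n, step (letter3 ε l c ((T3 ε l c)^[m] x))

variable {ε l c x : ℝ}

@[simp]
theorem displacement_zero : displacement ε l c x 0 = 0 := rfl

theorem displacement_succ (n : ℕ) : displacement ε l c x (n + 1) =
    displacement ε l c x n + step (letter3 ε l c ((T3 ε l c)^[n] x)) :=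
  Finset.sum_range_succ ..

theorem displacement_zero_succ (n : ℕ) : displacement ε l c 0 (n + 1) =
    displacement ε l c 0 n + step (threeIetWordN ε l c n) :=
  displacement_succ n

theorem displacement_add (m n : ℕ) : displacement ε l c x (m + n) =
    displacement ε l c x m + displacement ε l c ((T3 ε l c)^[m] x) n := by
  simp only [displacement, Finset.sum_range_add, ← iterate_add_apply, add_comm]

theorem T3_eq_add_val (x : ℝ) : T3 ε l c x = x + val ε (step (letter3 ε l c x)) := by
  unfold T3 letter3
  split_ifs <;> simp [step, val_apply] <;> ring

theorem iterate_T3_eq (n : ℕ) : (T3 ε l c)^[n] x = x + val ε (displacement ε l c x n) := by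
  induction n with
  | zero => simp
  | succ n ih =>
    rw [iterate_succ_apply', T3_eq_add_val, displacement_succ, map_add, ← add_assoc, ← ih]

theorem iterate_T3_zero_eq (n : ℕ) : (T3 ε l c)^[n] 0 = val ε (displacement ε l c 0 n) := by
  rw [iterate_T3_eq, zero_add]

theorem displacement_zero_add (m n : ℕ) : displacement ε l c 0 (m + n) =
    displacement ε l c 0 m + displacement ε l c (val ε (displacement ε l c 0 m)) n := by
  rw [displacement_add, iterate_T3_zero_eq]

theorem mapsTo_T3 (h : IsExchange ε l) : MapsTo (T3 ε l c) (Ico c (c + l)) (Ico c (c + l)) := by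
  obtain ⟨-, _, _, _, _, _⟩ := h
  rintro x ⟨hcx, hxc⟩
  unfold T3
  split_ifs <;> constructor <;> linarith

theorem add_val_displacement_mem (h : IsExchange ε l) (hx : x ∈ Ico c (c + l)) (n : ℕ) :
    x + val ε (displacement ε l c x n) ∈ Ico c (c + l) :=
  iterate_T3_eq (ε := ε) n ▸ (mapsTo_T3 h).iterate n hx

theorem val_displacement_mem (h : IsExchange ε l) (h0 : 0 ∈ Ico c (c + l)) (n : ℕ) :
    val ε (displacement ε l c 0 n) ∈ Ico c (c + l) := by
  simpa using add_val_displacement_mem h h0 n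

section Height

variable {g₀ g₁ : ℝ}

theorem min_le_height_step (hg₀ : 0 < g₀) (hg₁ : 0 < g₁) (a : Fin 3) :
    min g₀ g₁ ≤ linearForm g₀ g₁ (step a) := by
  fin_cases a <;> simp [step, hg₀.le, hg₁.le]

theorem height_step_pos (hg₀ : 0 < g₀) (hg₁ : 0 < g₁) (a : Fin 3) :
    0 < linearForm g₀ g₁ (step a) :=
  (lt_min hg₀ hg₁).trans_le (min_le_height_step hg₀ hg₁ a)

theorem strictMono_height_displacement (hg₀ : 0 < g₀) (hg₁ : 0 < g₁) :
    StrictMono fun n => linearForm g₀ g₁ (displacement ε l c x n) :=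
  strictMono_nat_of_lt_succ fun n => by
    rw [displacement_succ, map_add]
    exact lt_add_of_pos_right _ (height_step_pos hg₀ hg₁ _)

theorem displacement_injective : Injective (displacement ε l c x) :=
  Injective.of_comp (f := linearForm 1 1) (strictMono_height_displacement one_pos one_pos).injective

theorem exists_lt_height_displacement (hg₀ : 0 < g₀) (hg₁ : 0 < g₁) (K : ℝ) :
    ∃ n, K < linearForm g₀ g₁ (displacement ε l c x n) := by
  have hmin : 0 < min g₀ g₁ := lt_min hg₀ hg₁
  obtain ⟨n, hn⟩ := exists_nat_gt (K / min g₀ g₁)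
  refine ⟨n, ((div_lt_iff₀ hmin).1 hn).trans_le ?_⟩
  rw [displacement, map_sum]
  simpa using Finset.card_nsmul_le_sum (Finset.range n) _ _
    fun m _ => min_le_height_step hg₀ hg₁ (letter3 ε l c ((T3 ε l c)^[m] x))

theorem eq_zero_of_height_lt_height_step (h : IsExchange ε l) (hg₀ : 0 < g₀) (hg₁ : 0 < g₁)
    {z : ℤ × ℤ} (hx : x ∈ Ico c (c + l)) (hxz : x + val ε z ∈ Ico c (c + l))
    (hz : 0 ≤ linearForm g₀ g₁ z)
    (hz' : linearForm g₀ g₁ z < linearForm g₀ g₁ (step (letter3 ε l c x))) : z = 0 := by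
  obtain ⟨-, _, _, _, _, _⟩ := h
  obtain ⟨_, _⟩ := hx
  obtain ⟨_, _⟩ := hxz
  obtain ⟨i, j⟩ := z
  have hstep : linearForm g₀ g₁ (step (letter3 ε l c x)) ≤ g₀ + g₁ := by
    generalize letter3 ε l c x = a
    fin_cases a <;> simp [step, hg₀.le, hg₁.le]
  simp only [linearForm_apply, val_apply] at *
  rcases le_or_gt i 0 with hi | hi <;> rcases le_or_gt j 0 with hj | hj
  · have hi' : (i : ℝ) ≤ 0 := by exact_mod_cast hi
    have hj' : (j : ℝ) ≤ 0 := by exact_mod_cast hj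
    have hi₀ : (i : ℝ) = 0 := by nlinarith
    have hj₀ : (j : ℝ) = 0 := by nlinarith
    exact Prod.ext (by exact_mod_cast hi₀) (by exact_mod_cast hj₀)
  · have hi' : (i : ℝ) ≤ 0 := by exact_mod_cast hi
    have hj' : (1 : ℝ) ≤ j := by exact_mod_cast hj
    have hletter : letter3 ε l c x = 2 := by
      rw [letter3, if_neg (by nlinarith), if_neg (by nlinarith)]
    simp only [hletter, step, Matrix.cons_val, Int.cast_zero, Int.cast_one] at hz'
    have : (i : ℝ) ≤ -1 := by
      have : i ≠ 0 := by rintro rfl; simp at hz'; nlinarith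
      exact_mod_cast (by omega : i ≤ -1)
    nlinarith
  · have hi' : (1 : ℝ) ≤ i := by exact_mod_cast hi
    have hj' : (j : ℝ) ≤ 0 := by exact_mod_cast hj
    have hletter : letter3 ε l c x = 0 := by rw [letter3, if_pos (by nlinarith)]
    simp only [hletter, step, Matrix.cons_val, Int.cast_zero, Int.cast_one] at hz'
    have : (j : ℝ) ≤ -1 := by
      have : j ≠ 0 := by rintro rfl; simp at hz'; nlinarith
      exact_mod_cast (by omega : j ≤ -1)
    nlinarith
  · have hi' : (1 : ℝ) ≤ i := by exact_mod_cast hi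
    have hj' : (1 : ℝ) ≤ j := by exact_mod_cast hj
    nlinarith

theorem exists_displacement_eq (h : IsExchange ε l) (hg₀ : 0 < g₀) (hg₁ : 0 < g₁) {z : ℤ × ℤ}
    (hx : x ∈ Ico c (c + l)) (hxz : x + val ε z ∈ Ico c (c + l)) (hz : 0 ≤ linearForm g₀ g₁ z) :
    ∃ n, displacement ε l c x n = z := by
  obtain ⟨n, hn, hn'⟩ := Nat.exists_not_and_succ_of_not_zero_of_exists
    (p := fun n => linearForm g₀ g₁ z < linearForm g₀ g₁ (displacement ε l c x n))
    (by simpa using hz) (exists_lt_height_displacement hg₀ hg₁ _)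
  rw [displacement_succ, map_add] at hn'
  refine ⟨n, (sub_eq_zero.1 (eq_zero_of_height_lt_height_step (x := (T3 ε l c)^[n] x) h hg₀ hg₁
    ((mapsTo_T3 h).iterate n hx) ?_ ?_ ?_)).symm⟩
  · rwa [iterate_T3_eq, map_sub, add_add_sub_cancel]
  · rw [map_sub]; linarith
  · rw [map_sub]; linarith

end Height

theorem exists_val_displacement_mem_Ioo (h : IsExchange ε l) (h0 : 0 ∈ Ico c (c + l)) {p q : ℝ}
    (hpq : p < q) (hp : c ≤ p) (hq : q ≤ c + l) :
    ∃ n, val ε (displacement ε l c 0 n) ∈ Ioo p q := by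
  obtain ⟨z, hz, hheight⟩ := exists_val_mem_Ioo_and_lt_height h.irrational h.pos h.lt_one one_pos
    one_pos hpq 0
  obtain ⟨n, rfl⟩ := exists_displacement_eq h one_pos one_pos h0
    (by rw [zero_add]; exact ⟨hp.trans hz.1.le, hz.2.trans_le hq⟩) hheight.le
  exact ⟨n, hz⟩

end Exchange

section Letters

variable {ε l c x y : ℝ}

theorem letter3_eq_zero_iff : letter3 ε l c x = 0 ↔ x < c + l - 1 + ε := by
  unfold letter3
  split_ifs <;> simp_all

theorem letter3_eq_two_iff (hl : l ≤ 1) : letter3 ε l c x = 2 ↔ c + ε ≤ x := by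
  have : x < c + l - 1 + ε → x < c + ε := fun h => by linarith
  unfold letter3
  split_ifs <;> simp_all

theorem letter3_eq_one_iff :
    letter3 ε l c x = 1 ↔ x ∈ Ico (c + l - 1 + ε) (c + ε) := by
  unfold letter3
  split_ifs <;> simp_all

theorem letter3_monotone : Monotone (letter3 ε l c) := by
  intro x y hxy
  unfold letter3
  split_ifs <;> first | decide | (exfalso; linarith)

/-- The points of `[c, c + l)` near which the coding `letter3` is constant. -/
structure IsInterior (ε l c y : ℝ) : Prop where
  mem : y ∈ Ioo c (c + l)
  ne_left : y ≠ c + l - 1 + ε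
  ne_right : y ≠ c + ε

theorem IsInterior.of_letter3_eq (hl : l ≤ 1) (hx : c ≤ x) (hxy : x < y) (hy : y < c + l)
    (hletter : letter3 ε l c x = letter3 ε l c y) : IsInterior ε l c y where
  mem := ⟨hx.trans_lt hxy, hy⟩
  ne_left := by
    rintro rfl
    exact lt_irrefl _ (letter3_eq_zero_iff.1 (hletter ▸ letter3_eq_zero_iff.2 hxy))
  ne_right := by
    rintro rfl
    exact hxy.not_ge ((letter3_eq_two_iff hl).1 (hletter.trans ((letter3_eq_two_iff hl).2 le_rfl)))

theorem IsInterior.eventually_letter3_eq (h : IsInterior ε l c y) :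
    ∀ᶠ x in 𝓝 y, letter3 ε l c x = letter3 ε l c y := by
  have hnear {b : ℝ} (hb : y ≠ b) : ∀ᶠ x in 𝓝 y, (x < b ↔ y < b) := by
    rcases hb.lt_or_gt with hb | hb
    · filter_upwards [eventually_lt_nhds hb] with x hx using iff_of_true hx hb
    · filter_upwards [eventually_gt_nhds hb] with x hx using iff_of_false hx.not_gt hb.not_gt
  filter_upwards [hnear h.ne_left, hnear h.ne_right] with x hx hx'
  rw [letter3, letter3]
  split_ifs <;> tauto

theorem IsInterior.exists_orbit_near (hX : IsExchange ε l) (h0 : 0 ∈ Ico c (c + l))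
    (h : IsInterior ε l c y) {P : ℝ → Prop} (hP : ∀ᶠ x in 𝓝 y, P x) :
    (∃ n, val ε (displacement ε l c 0 n) < y ∧ threeIetWordN ε l c n = letter3 ε l c y ∧
      P (val ε (displacement ε l c 0 n))) ∧
    ∃ n, y < val ε (displacement ε l c 0 n) ∧ threeIetWordN ε l c n = letter3 ε l c y ∧
      P (val ε (displacement ε l c 0 n)) := by
  obtain ⟨p, q, ⟨hpy, hyq⟩, hsub⟩ := mem_nhds_iff_exists_Ioo_subset.1
    ((h.eventually_letter3_eq.and hP).and (Ioo_mem_nhds h.mem.1 h.mem.2))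
  simp only [threeIetWordN, iterate_T3_zero_eq]
  constructor
  · obtain ⟨n, hn⟩ := exists_val_displacement_mem_Ioo hX h0 (max_lt hpy h.mem.1) (le_max_right p c)
      h.mem.2.le
    exact ⟨n, hn.2, (hsub ⟨(le_max_left _ _).trans_lt hn.1, hn.2.trans hyq⟩).1⟩
  · obtain ⟨n, hn⟩ := exists_val_displacement_mem_Ioo hX h0 (lt_min hyq h.mem.2) h.mem.1.le
      (min_le_right q (c + l))
    exact ⟨n, hn.1, (hsub ⟨hpy.trans hn.1, hn.2.trans_le (min_le_left _ _)⟩).1⟩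

end Letters

section Scaling

theorem apply_iterate_eq_pow_mul {X R : Type*} [Monoid R] {f : X → R} {g : X → X} {r : R}
    (h : ∀ x, f (g x) = r * f x) (n : ℕ) (x : X) : f (g^[n] x) = r ^ n * f x := by
  induction n with
  | zero => simp
  | succ n ih => rw [iterate_succ_apply', h, ih, pow_succ', mul_assoc]

/-- An endomorphism of `ℤ²` contracting the value `val ε` by `ratio` and multiplying by
`heightRatio` some height that separates lattice points: a hyperbolic integer matrix in the
coordinates given by its two eigenforms. -/
structure Scaling (ε : ℝ) where
  hom : AddMonoid.End (ℤ × ℤ)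
  ratio : ℝ
  heightRatio : ℝ
  g₀ : ℝ
  g₁ : ℝ
  val_hom : ∀ z, val ε (hom z) = ratio * val ε z
  linearForm_hom : ∀ z, linearForm g₀ g₁ (hom z) = heightRatio * linearForm g₀ g₁ z
  ratio_pos : 0 < ratio
  ratio_lt_one : ratio < 1
  heightRatio_pos : 0 < heightRatio
  g₀_pos : 0 < g₀
  g₁_pos : 0 < g₁
  linearForm_injective : Injective (linearForm g₀ g₁)

namespace Scaling

variable {ε : ℝ} (S : Scaling ε)

/-- The height form of a scaling. -/
def height : ℤ × ℤ →+ ℝ := linearForm S.g₀ S.g₁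

/-- The powers of a scaling, for positive exponents. -/
def pow (n : ℕ) (hn : n ≠ 0) : Scaling ε where
  hom := S.hom ^ n
  ratio := S.ratio ^ n
  heightRatio := S.heightRatio ^ n
  g₀ := S.g₀
  g₁ := S.g₁
  val_hom z := by rw [AddMonoid.End.coe_pow, apply_iterate_eq_pow_mul S.val_hom]
  linearForm_hom z := by rw [AddMonoid.End.coe_pow, apply_iterate_eq_pow_mul S.linearForm_hom]
  ratio_pos := pow_pos S.ratio_pos n
  ratio_lt_one := pow_lt_one₀ S.ratio_pos.le S.ratio_lt_one hn
  heightRatio_pos := pow_pos S.heightRatio_pos n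
  g₀_pos := S.g₀_pos
  g₁_pos := S.g₁_pos
  linearForm_injective := S.linearForm_injective

/-- The 3iet word with parameters `ε, l, c` is self-similar, and `S` sends the translation of the
orbit of `0` at time `n` to its translation at the `n`-th cut. -/
def Renormalizes (l c : ℝ) : Prop :=
  ∃ k : ℕ → ℕ, IsSelfSimilar (threeIetWordN ε l c) k ∧
    ∀ n, displacement ε l c 0 (k n) = S.hom (displacement ε l c 0 n)

/-- In the contracted copy `ratio * [c, c + l)`, no interior point reaches the boundary point `A` of
`[c, c + l)` before its return time. -/
def Avoids (l c A : ℝ) : Prop :=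
  ∀ y z, IsInterior ε l c y → 0 < S.height z →
    S.height z < S.heightRatio * S.height (step (letter3 ε l c y)) → S.ratio * y + val ε z ≠ A

variable {S} {l c A : ℝ}

theorem height_hom (z : ℤ × ℤ) : S.height (S.hom z) = S.heightRatio * S.height z :=
  S.linearForm_hom z

theorem height_injective : Injective S.height := S.linearForm_injective

theorem height_step_pos (a : Fin 3) : 0 < S.height (step a) :=
  ThreeIet.height_step_pos S.g₀_pos S.g₁_pos a

theorem strictMono_height_displacement {x : ℝ} :
    StrictMono fun n => S.height (displacement ε l c x n) :=
  ThreeIet.strictMono_height_displacement S.g₀_pos S.g₁_pos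

theorem height_displacement_nonneg {x : ℝ} (n : ℕ) : 0 ≤ S.height (displacement ε l c x n) := by
  simpa using S.strictMono_height_displacement.monotone n.zero_le

theorem exists_displacement_eq (h : IsExchange ε l) {x : ℝ} {z : ℤ × ℤ} (hx : x ∈ Ico c (c + l))
    (hxz : x + val ε z ∈ Ico c (c + l)) (hz : 0 ≤ S.height z) :
    ∃ n, displacement ε l c x n = z :=
  ThreeIet.exists_displacement_eq h S.g₀_pos S.g₁_pos hx hxz hz

theorem ratio_mul_mem (h0 : 0 ∈ Ico c (c + l)) {x : ℝ} (hx : x ∈ Ico c (c + l)) :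
    S.ratio * x ∈ Ico c (c + l) := by
  have := convex_Ico c (c + l) |>.smul_mem_of_zero_mem h0 hx ⟨S.ratio_pos.le, S.ratio_lt_one.le⟩
  rwa [smul_eq_mul] at this

theorem Renormalizes.pow (h : S.Renormalizes l c) (n : ℕ) (hn : n ≠ 0) :
    (S.pow n hn).Renormalizes l c := by
  obtain ⟨k, hk, hkS⟩ := h
  refine ⟨k^[n], hk.iterate n, fun m => ?_⟩
  exact (Semiconj.iterate_right (show Semiconj (displacement ε l c 0) k S.hom from hkS) n m).trans
    (congrFun (AddMonoid.End.coe_pow _ S.hom n).symm _)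

/-- The lattice vectors over the interval whose height lies within that of a block are the ones the
block visits, and the vectors visited depend only on the letter. -/
theorem mem_of_isSelfSimilar (h : IsExchange ε l) (h0 : 0 ∈ Ico c (c + l)) {k : ℕ → ℕ}
    (hk : IsSelfSimilar (threeIetWordN ε l c) k)
    (hkS : ∀ n, displacement ε l c 0 (k n) = S.hom (displacement ε l c 0 n)) {m n : ℕ} {z : ℤ × ℤ}
    (hmn : threeIetWordN ε l c m = threeIetWordN ε l c n) (hz : 0 < S.height z)
    (hz' : S.height z < S.heightRatio * S.height (step (threeIetWordN ε l c m)))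
    (hm : S.ratio * val ε (displacement ε l c 0 m) + val ε z ∈ Ico c (c + l)) :
    S.ratio * val ε (displacement ε l c 0 n) + val ε z ∈ Ico c (c + l) := by
  rw [← S.val_hom, ← hkS] at hm ⊢
  obtain ⟨i, rfl⟩ := S.exists_displacement_eq h (val_displacement_mem h h0 (k m)) hm hz.le
  have hi : i < k (m + 1) - k m := by
    have hmono := S.strictMono_height_displacement (l := l) (c := c) (x := 0)
    rw [Nat.lt_sub_iff_add_lt', ← hmono.lt_iff_lt]
    simp only [displacement_zero_add, hkS (m + 1), displacement_zero_succ, map_add, ← hkS,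
      height_hom]
    linarith
  suffices displacement ε l c (val ε (displacement ε l c 0 (k m))) i =
      displacement ε l c (val ε (displacement ε l c 0 (k n))) i by
    rw [this]
    exact add_val_displacement_mem h (val_displacement_mem h h0 _) i
  refine Finset.sum_congr rfl fun t ht => ?_
  have := hk.letter_eq hmn t ((Finset.mem_range.1 ht).trans hi)
  simp only [threeIetWordN, add_comm _ t, iterate_add_apply] at this
  rw [← iterate_T3_zero_eq, ← iterate_T3_zero_eq, this]

theorem Renormalizes.avoids (h : IsExchange ε l) (h0 : 0 ∈ Ico c (c + l))
    (hS : S.Renormalizes l c) : S.Avoids l c c ∧ S.Avoids l c (c + l) := by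
  obtain ⟨k, hk, hkS⟩ := hS
  have hl : 0 < l := h.pos.trans h.lt_length
  have hcont (y : ℝ) (z : ℤ × ℤ) : ContinuousAt (fun x => S.ratio * x + val ε z) y := by fun_prop
  constructor <;> intro y z hy hz hz' heq
  · obtain ⟨⟨n, hny, hn, -⟩, m, hym, hm, hmem⟩ := hy.exists_orbit_near h h0
      ((hcont y z).eventually_lt (continuousAt_const (y := c + l)) (by linarith))
    have hnlt := mul_lt_mul_of_pos_left hny S.ratio_pos
    have hmlt := mul_lt_mul_of_pos_left hym S.ratio_pos
    have := (mem_of_isSelfSimilar h h0 hk hkS (hm.trans hn.symm) hz (by rwa [hm])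
      ⟨by linarith, hmem⟩).1
    linarith
  · obtain ⟨⟨n, hny, hn, hmem⟩, m, hym, hm, -⟩ := hy.exists_orbit_near h h0
      ((continuousAt_const (y := c)).eventually_lt (hcont y z) (by linarith))
    have hnlt := mul_lt_mul_of_pos_left hny S.ratio_pos
    have hmlt := mul_lt_mul_of_pos_left hym S.ratio_pos
    have := (mem_of_isSelfSimilar h h0 hk hkS (hn.trans hm.symm) hz (by rwa [hn])
      ⟨hmem.le, by linarith⟩).2
    linarith

/-- By the intermediate value theorem, a contracted point cannot enter or leave the interval while
moving inside the interval of a letter. -/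
theorem Avoids.mem_of_letter3_eq (hl : l ≤ 1) (hc : S.Avoids l c c) (hcl : S.Avoids l c (c + l))
    {x y : ℝ} (hx : x ∈ Ico c (c + l)) (hy : y ∈ Ico c (c + l))
    (hxy : letter3 ε l c x = letter3 ε l c y) {z : ℤ × ℤ} (hz : 0 < S.height z)
    (hz' : S.height z < S.heightRatio * S.height (step (letter3 ε l c x)))
    (hmem : S.ratio * x + val ε z ∈ Ico c (c + l)) :
    S.ratio * y + val ε z ∈ Ico c (c + l) := by
  have hdiv (A : ℝ) : S.ratio * ((A - val ε z) / S.ratio) + val ε z = A := by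
    rw [mul_div_cancel₀ _ S.ratio_pos.ne', sub_add_cancel]
  have hinterior {s t u : ℝ} (hs : c ≤ s) (hu : u < c + l) (hst : s < t) (htu : t ≤ u)
      (hsu : letter3 ε l c s = letter3 ε l c u) :
      IsInterior ε l c t ∧ letter3 ε l c t = letter3 ε l c s := by
    have : letter3 ε l c s = letter3 ε l c t :=
      (letter3_monotone hst.le).antisymm (hsu ▸ letter3_monotone htu)
    exact ⟨.of_letter3_eq hl hs hst (htu.trans_lt hu) this, this.symm⟩
  constructor <;> by_contra! hout
  · obtain ⟨hint, hlet⟩ := hinterior hy.1 hx.2 (t := (c - val ε z) / S.ratio)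
      (by rw [lt_div_iff₀ S.ratio_pos]; linarith)
      (by rw [div_le_iff₀ S.ratio_pos]; linarith [hmem.1]) hxy.symm
    exact hc _ z hint hz (by rwa [hlet, ← hxy]) (hdiv c)
  · obtain ⟨hint, hlet⟩ := hinterior hx.1 hy.2 (t := (c + l - val ε z) / S.ratio)
      (by rw [lt_div_iff₀ S.ratio_pos]; linarith [hmem.2])
      (by rw [div_le_iff₀ S.ratio_pos]; linarith) hxy
    exact hcl _ z hint hz (by rwa [hlet]) (hdiv (c + l))

theorem height_step_letter3_le (h : IsExchange ε l) {x : ℝ} (hx : x ∈ Ico c (c + l)) {a : Fin 3}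
    (hxa : x + val ε (step a) ∈ Ico c (c + l)) :
    S.height (step (letter3 ε l c x)) ≤ S.height (step a) := by
  by_contra! hlt
  have := eq_zero_of_height_lt_height_step h S.g₀_pos S.g₁_pos hx hxa (S.height_step_pos a).le hlt
  exact (S.height_step_pos a).ne' (by rw [this, map_zero])

theorem displacement_congr (h : IsExchange ε l) {x y H : ℝ} (hx : x ∈ Ico c (c + l))
    (hy : y ∈ Ico c (c + l))
    (hxy : ∀ z, 0 ≤ S.height z → S.height z ≤ H →
      (x + val ε z ∈ Ico c (c + l) ↔ y + val ε z ∈ Ico c (c + l))) (n : ℕ)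
    (hn : S.height (displacement ε l c x n) ≤ H) :
    displacement ε l c x n = displacement ε l c y n := by
  induction n with
  | zero => rfl
  | succ n ih =>
    have ih := ih ((S.strictMono_height_displacement n.lt_succ_self).le.trans hn)
    have hnonneg (a : Fin 3) : 0 ≤ S.height (displacement ε l c x n + step a) := by
      rw [map_add]
      exact add_nonneg (S.height_displacement_nonneg n) (S.height_step_pos a).le
    have hx' := add_val_displacement_mem h hx n
    have hy' := add_val_displacement_mem h hy n
    have hxn := add_val_displacement_mem h hx (n + 1)
    have hyn := add_val_displacement_mem h hy (n + 1)
    simp only [displacement_succ, iterate_T3_eq, ← ih] at hn hxn hyn hy' ⊢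
    have hba := (hxy _ (hnonneg _) hn).1 hxn
    rw [map_add, ← add_assoc] at hba
    replace hba := S.height_step_letter3_le h hy' hba
    have hab := (hxy _ (hnonneg _) (by rw [map_add] at hn ⊢; linarith)).2 hyn
    rw [map_add, ← add_assoc] at hab
    rw [S.height_injective ((S.height_step_letter3_le h hx' hab).antisymm hba)]

theorem Avoids.displacement_congr (h : IsExchange ε l) (h0 : 0 ∈ Ico c (c + l))
    (hc : S.Avoids l c c) (hcl : S.Avoids l c (c + l)) {x y : ℝ} (hx : x ∈ Ico c (c + l))
    (hy : y ∈ Ico c (c + l)) (hxy : letter3 ε l c x = letter3 ε l c y) {n : ℕ}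
    (hn : S.height (displacement ε l c (S.ratio * x) n) ≤
      S.heightRatio * S.height (step (letter3 ε l c x))) :
    displacement ε l c (S.ratio * x) n = displacement ε l c (S.ratio * y) n := by
  have hx' := ratio_mul_mem (S := S) h0 hx
  have hy' := ratio_mul_mem (S := S) h0 hy
  refine Scaling.displacement_congr h hx' hy' (fun z hz hz' => ?_) n hn
  rcases hz.eq_or_lt with hz | hz
  · rw [S.height_injective (hz.symm.trans (map_zero S.height).symm), map_zero, add_zero, add_zero]
    exact iff_of_true hx' hy'
  rcases hz'.eq_or_lt with hz' | hz'
  · rw [S.height_injective (hz'.trans (S.height_hom _).symm), S.val_hom, ← mul_add, ← mul_add]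
    nth_rw 2 [hxy]
    rw [← T3_eq_add_val, ← T3_eq_add_val]
    exact iff_of_true (ratio_mul_mem h0 (mapsTo_T3 h hx)) (ratio_mul_mem h0 (mapsTo_T3 h hy))
  · exact ⟨hc.mem_of_letter3_eq h.length_le_one hcl hx hy hxy hz hz',
      hc.mem_of_letter3_eq h.length_le_one hcl hy hx hxy.symm hz (hxy ▸ hz')⟩

theorem exists_strictMono_displacement_eq (h : IsExchange ε l) (h0 : 0 ∈ Ico c (c + l)) :
    ∃ k : ℕ → ℕ, StrictMono k ∧
      ∀ n, displacement ε l c 0 (k n) = S.hom (displacement ε l c 0 n) := by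
  have hk (n : ℕ) : ∃ m, displacement ε l c 0 m = S.hom (displacement ε l c 0 n) :=
    S.exists_displacement_eq h h0
      (by rw [zero_add, S.val_hom]; exact ratio_mul_mem h0 (val_displacement_mem h h0 n))
      (by rw [height_hom]; exact mul_nonneg S.heightRatio_pos.le (S.height_displacement_nonneg n))
  choose k hk using hk
  refine ⟨k, fun m n hmn => ?_, hk⟩
  rw [← (S.strictMono_height_displacement (l := l) (c := c) (x := 0)).lt_iff_lt]
  simp only [hk, height_hom]
  exact mul_lt_mul_of_pos_left (S.strictMono_height_displacement hmn) S.heightRatio_pos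

theorem renormalizes_of_avoids (h : IsExchange ε l) (h0 : 0 ∈ Ico c (c + l))
    (hc : S.Avoids l c c) (hcl : S.Avoids l c (c + l)) : S.Renormalizes l c := by
  have hx := val_displacement_mem h h0
  obtain ⟨k, hmono, hk⟩ := S.exists_strictMono_displacement_eq h h0
  have hblock (n i : ℕ) : displacement ε l c 0 (k n + i) = S.hom (displacement ε l c 0 n) +
      displacement ε l c (S.ratio * val ε (displacement ε l c 0 n)) i := by
    rw [displacement_zero_add, hk, S.val_hom]
  have hend (n : ℕ) : displacement ε l c (S.ratio * val ε (displacement ε l c 0 n))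
      (k (n + 1) - k n) = S.hom (step (threeIetWordN ε l c n)) := by
    have := hblock n (k (n + 1) - k n)
    rw [Nat.add_sub_cancel' (hmono.monotone n.le_succ), hk, displacement_zero_succ, map_add] at this
    exact (add_left_cancel this).symm
  have hcongr {n m : ℕ} (hnm : threeIetWordN ε l c n = threeIetWordN ε l c m) (i : ℕ)
      (hi : i ≤ k (n + 1) - k n) :
      displacement ε l c (S.ratio * val ε (displacement ε l c 0 n)) i =
        displacement ε l c (S.ratio * val ε (displacement ε l c 0 m)) i := by
    simp only [threeIetWordN, iterate_T3_zero_eq] at hnm hend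
    refine hc.displacement_congr h h0 hcl (hx n) (hx m) hnm ?_
    rw [← height_hom, ← hend]
    exact S.strictMono_height_displacement.monotone hi
  refine ⟨k, ⟨?_, hmono, fun {n m} hnm => ?_, fun {n m} hnm i hi => step_injective ?_⟩, hk⟩
  · exact displacement_injective (by rw [hk, displacement_zero, map_zero])
  · apply displacement_injective (ε := ε) (l := l) (c := c)
      (x := S.ratio * val ε (displacement ε l c 0 m))
    rw [hend, ← hcongr hnm _ le_rfl, hend, hnm]
  · have hstep (n : ℕ) := displacement_zero_succ (ε := ε) (l := l) (c := c) (k n + i)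
    simp only [add_assoc, hblock] at hstep
    have hn := hstep n
    rw [hcongr hnm i hi.le, hcongr hnm (i + 1) hi] at hn
    exact add_left_cancel ((add_left_cancel hn).symm.trans (add_left_cancel (hstep m)))

theorem Renormalizes.one_lt_heightRatio (h : IsExchange ε l) (hS : S.Renormalizes l c) :
    1 < S.heightRatio := by
  obtain ⟨k, hk, hkS⟩ := hS
  have hpos : 0 < S.height (displacement ε l c 0 1) := by
    simpa using S.strictMono_height_displacement (l := l) (c := c) (x := 0) one_pos
  have hle := S.strictMono_height_displacement (l := l) (c := c) (x := 0) |>.monotone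
    (hk.strictMono.id_le 1)
  simp only [id, hkS, height_hom] at hle
  refine lt_of_le_of_ne (by nlinarith) fun hone => ?_
  have hfix := S.height_injective ((S.height_hom (1, 0)).trans (by rw [← hone, one_mul]))
  have hval := S.val_hom (1, 0)
  simp only [hfix, val_apply, Int.cast_one, Int.cast_zero, one_mul, zero_mul, add_zero] at hval
  nlinarith [S.ratio_lt_one, h.lt_one]

end Scaling

end Scaling

section Reflection

variable {ε l c y : ℝ}

theorem val_one_sub_swap (z : ℤ × ℤ) : val (1 - ε) z.swap = -val ε z := by
  simp only [val_apply, Prod.fst_swap, Prod.snd_swap]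
  ring

theorem step_rev (a : Fin 3) : step a.rev = (step a).swap := by
  fin_cases a <;> rfl

theorem isInterior_neg_iff : IsInterior (1 - ε) l (-(c + l)) (-y) ↔ IsInterior ε l c y := by
  constructor <;> rintro ⟨⟨hc, hcl⟩, hleft, hright⟩ <;>
    exact ⟨⟨by linarith, by linarith⟩, fun h => hright (by linarith), fun h => hleft (by linarith)⟩

theorem IsInterior.letter3_neg (hl : l ≤ 1) (h : IsInterior ε l c y) :
    letter3 (1 - ε) l (-(c + l)) (-y) = (letter3 ε l c y).rev := by
  obtain ⟨-, hleft, hright⟩ := h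
  unfold letter3
  rcases hleft.lt_or_gt with hy | hy
  · rw [if_neg (by linarith), if_neg (by linarith), if_pos hy]
    rfl
  rcases hright.lt_or_gt with hy' | hy'
  · rw [if_neg (by linarith), if_pos (by linarith), if_neg hy.not_gt, if_pos hy']
    rfl
  · rw [if_pos (by linarith), if_neg hy.not_gt, if_neg hy'.not_gt]
    rfl

namespace Scaling

variable (S : Scaling ε)

/-- The scaling `S` seen through the symmetry `x ↦ -x`, which exchanges the translations `1 - ε`
and `-ε` up to sign. It turns statements about left endpoints into statements about right ones. -/
def reflect : Scaling (1 - ε) where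
  hom := AddEquiv.prodComm.toAddMonoidHom.comp (S.hom.comp AddEquiv.prodComm.toAddMonoidHom)
  ratio := S.ratio
  heightRatio := S.heightRatio
  g₀ := S.g₁
  g₁ := S.g₀
  val_hom z := by
    have := S.val_hom z.swap
    rw [← neg_inj, ← mul_neg, ← val_one_sub_swap, ← val_one_sub_swap] at this
    exact this
  linearForm_hom z := by
    have := S.linearForm_hom z.swap
    simp only [linearForm_apply, Prod.fst_swap, Prod.snd_swap] at this ⊢
    rw [add_comm, add_comm (_ * S.g₁)]
    exact this
  ratio_pos := S.ratio_pos
  ratio_lt_one := S.ratio_lt_one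
  heightRatio_pos := S.heightRatio_pos
  g₀_pos := S.g₁_pos
  g₁_pos := S.g₀_pos
  linearForm_injective := by
    have : ⇑(linearForm S.g₁ S.g₀) = linearForm S.g₀ S.g₁ ∘ Prod.swap := by
      ext z
      simp [add_comm]
    exact this ▸ S.linearForm_injective.comp Prod.swap_injective

variable {S} {A : ℝ}

theorem height_reflect_swap (z : ℤ × ℤ) : S.reflect.height z.swap = S.height z := by
  simp [height, reflect, add_comm]

theorem avoids_reflect_iff (hl : l ≤ 1) :
    S.reflect.Avoids l (-(c + l)) (-A) ↔ S.Avoids l c A := by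
  refine .symm <| (Equiv.neg ℝ).forall_congr fun {y} =>
    (Equiv.prodComm ℤ ℤ).forall_congr fun {z} => ?_
  refine imp_congr_ctx isInterior_neg_iff.symm fun hy => ?_
  simp only [Equiv.neg_apply, Equiv.prodComm_apply] at hy ⊢
  rw [(isInterior_neg_iff.1 hy).letter3_neg hl, step_rev, height_reflect_swap, height_reflect_swap,
    val_one_sub_swap, mul_neg, ← neg_add, ne_eq, ne_eq, neg_inj]
  rfl

end Scaling

end Reflection

section Cosets

variable {ε l c : ℝ}

theorem sub_mem_lattice_of_not_isInterior {y : ℝ} (hy : y ∈ Ico c (c + l))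
    (hint : ¬ IsInterior ε l c y) : y - c ∈ lattice ε ∨ y - (c + l) ∈ lattice ε := by
  by_contra! h
  refine hint ⟨⟨hy.1.lt_of_ne' ?_, hy.2⟩, ?_, ?_⟩ <;> rintro rfl
  · exact h.1 (by simp)
  · have := intCast_add_mul_mem_lattice (ε := ε) (-1) 1
    push_cast at this
    exact h.2 (by convert this using 1; ring)
  · exact h.1 (by simpa using intCast_add_mul_mem_lattice (ε := ε) 0 1)

theorem eq_of_apply_apply_eq {X : Type*} {f : X → X} (hf : Surjective f) {a b : X} (hab : a ≠ b)
    (h : ∀ x, f x = a ∨ f x = b → x = a ∨ x = b) {x : X} (hx : f (f x) = a) : x = a := by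
  obtain ⟨y, hy⟩ := hf a
  obtain ⟨z, hz⟩ := hf b
  grind

theorem sub_mem_of_sub_sq_mul_mem {K : Type*} [Field K] {L : AddSubgroup K} {r c₀ c₁ : K}
    (hr : r ≠ 0) (hL : ∀ x ∈ L, r * x ∈ L) (hc : c₀ - c₁ ∉ L)
    (h : ∀ x, r * x - c₀ ∈ L ∨ r * x - c₁ ∈ L → x - c₀ ∈ L ∨ x - c₁ ∈ L) {x : K}
    (hx : r ^ 2 * x - c₀ ∈ L) : x - c₀ ∈ L := by
  simp only [← QuotientAddGroup.eq_iff_sub_mem] at hc h hx ⊢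
  let f : K ⧸ L →+ K ⧸ L := QuotientAddGroup.map L L (AddMonoidHom.mulLeft r) hL
  have hf : Surjective f := by
    rintro ⟨y⟩
    exact ⟨(r⁻¹ * y : K), congrArg _ (mul_inv_cancel_left₀ hr y)⟩
  refine eq_of_apply_apply_eq hf hc (by rintro ⟨x⟩; exact h x) ?_
  rw [sq, mul_assoc] at hx
  exact hx

namespace Scaling

variable {S : Scaling ε} {A : ℝ}

theorem Avoids.sub_mem_lattice_of_height_pos (h : IsExchange ε l) (h0 : 0 ∈ Icc c (c + l))
    (hA : A = c ∨ A = c + l) (hS : S.Avoids l c A) {x : ℝ} (hx : x ∈ Ico c (c + l)) {p : ℤ × ℤ}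
    (hp : 0 < S.height p) (hxp : S.ratio * x + val ε p = A) :
    x - c ∈ lattice ε ∨ x - (c + l) ∈ lattice ε := by
  suffices ∃ n, (T3 ε l c)^[n] x - c ∈ lattice ε ∨ (T3 ε l c)^[n] x - (c + l) ∈ lattice ε by
    obtain ⟨n, hn⟩ := this
    simpa only [iterate_T3_eq, add_sub_right_comm,
      AddSubgroup.add_mem_cancel_right _ (val_mem_lattice _)] using hn
  obtain ⟨n, hn, hn'⟩ := Nat.exists_not_and_succ_of_not_zero_of_exists
    (p := fun n => S.height p ≤ S.height (S.hom (displacement ε l c x n)))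
    (by simpa using hp) <| by
      obtain ⟨n, hn⟩ := exists_lt_height_displacement (ε := ε) (l := l) (c := c) (x := x) S.g₀_pos
        S.g₁_pos (S.height p / S.heightRatio)
      rw [div_lt_iff₀' S.heightRatio_pos] at hn
      exact ⟨n, by rw [height_hom]; exact hn.le⟩
  set X := (T3 ε l c)^[n] x with hX
  have hXmem : X ∈ Ico c (c + l) := (mapsTo_T3 h).iterate n hx
  set z := p - S.hom (displacement ε l c x n) with hz
  have hXz : S.ratio * X + val ε z = A := by
    rw [hX, hz, iterate_T3_eq, map_sub, S.val_hom, ← hxp]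
    ring
  have hzpos : 0 < S.height z := by rw [hz, map_sub]; linarith
  have hzle : S.height z ≤ S.heightRatio * S.height (step (letter3 ε l c X)) := by
    rw [displacement_succ, map_add, map_add, height_hom (step _)] at hn'
    rw [hz, map_sub]
    linarith
  rcases hzle.lt_or_eq with hlt | heq
  · exact ⟨n, sub_mem_lattice_of_not_isInterior hXmem fun hint => hS X z hint hzpos hlt hXz⟩
  · rw [S.height_injective (heq.trans (S.height_hom _).symm), S.val_hom, ← mul_add,
      ← T3_eq_add_val] at hXz
    refine ⟨n + 1, Or.inl ?_⟩
    rw [iterate_succ_apply', ← hX]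
    have hmem := mapsTo_T3 h hXmem
    have := S.ratio_pos
    have := S.ratio_lt_one
    obtain rfl | rfl := hA
    · rw [show T3 ε l A X = A by nlinarith [hmem.1, h0.1], sub_self]
      exact zero_mem _
    · nlinarith [hmem.2, h0.2]

theorem Avoids.sub_mem_lattice_or (h : IsExchange ε l) (h0 : 0 ∈ Icc c (c + l))
    (hA : A = c ∨ A = c + l) (hS : S.Avoids l c A) {x : ℝ} (hx : S.ratio * x - A ∈ lattice ε) :
    x - c ∈ lattice ε ∨ x - (c + l) ∈ lattice ε := by
  obtain ⟨p, hp⟩ := neg_mem hx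
  rw [neg_sub] at hp
  have hl : 0 < l := h.pos.trans h.lt_length
  obtain ⟨w, ⟨hcw, hwc⟩, hw⟩ := exists_val_mem_Ioo_and_lt_height h.irrational h.pos h.lt_one
    S.g₀_pos S.g₁_pos (show x - (c + l) < x - c by linarith) (-S.height p / S.heightRatio)
  rw [div_lt_iff₀' S.heightRatio_pos] at hw
  change _ < S.heightRatio * S.height w at hw
  have := hS.sub_mem_lattice_of_height_pos h h0 hA (x := x + val ε (-w))
    (p := p + S.hom w) ⟨by rw [map_neg]; linarith, by rw [map_neg]; linarith⟩
    (by rw [map_add, height_hom]; linarith)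
    (by rw [map_neg, map_add, hp, S.val_hom]; ring)
  simpa only [add_sub_right_comm, AddSubgroup.add_mem_cancel_right _ (val_mem_lattice _)] using this

theorem mul_mem_lattice {x : ℝ} (hx : x ∈ lattice ε) : S.ratio * x ∈ lattice ε := by
  obtain ⟨z, rfl⟩ := hx
  exact ⟨S.hom z, S.val_hom z⟩

theorem Avoids.sub_mem_lattice (h : IsExchange ε l) (h0 : 0 ∈ Icc c (c + l)) (hl : l ∉ lattice ε)
    (hc : S.Avoids l c c) (hcl : S.Avoids l c (c + l)) (hA : A = c ∨ A = c + l) {x : ℝ}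
    (hx : S.ratio ^ 2 * x - A ∈ lattice ε) : x - A ∈ lattice ε := by
  have hor (x : ℝ) (hx : S.ratio * x - c ∈ lattice ε ∨ S.ratio * x - (c + l) ∈ lattice ε) :
      x - c ∈ lattice ε ∨ x - (c + l) ∈ lattice ε :=
    hx.elim (hc.sub_mem_lattice_or h h0 (.inl rfl)) (hcl.sub_mem_lattice_or h h0 (.inr rfl))
  have hL (x : ℝ) : x ∈ lattice ε → S.ratio * x ∈ lattice ε := S.mul_mem_lattice
  obtain rfl | rfl := hA
  · refine sub_mem_of_sub_sq_mul_mem S.ratio_pos.ne' hL (fun hlat => hl ?_) hor hx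
    simpa using neg_mem hlat
  · refine sub_mem_of_sub_sq_mul_mem S.ratio_pos.ne' hL ?_ (fun x hx => (hor x hx.symm).symm) hx
    simpa using hl

end Scaling

end Cosets

section BoundaryComparison

variable {ε l c : ℝ}

theorem IsExchange.one (h : IsExchange ε l) : IsExchange ε 1 :=
  ⟨h.irrational, h.pos, h.lt_one, h.lt_one, sub_lt_self _ h.pos, le_rfl⟩

theorem IsExchange.lt_one_of_notMem (h : IsExchange ε l) (hl : l ∉ lattice ε) : l < 1 :=
  h.length_le_one.lt_of_ne fun h => hl (h ▸ one_mem_lattice)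

theorem IsInterior.T3_mem_Ioo (h : IsExchange ε 1) {y : ℝ} (hy : IsInterior ε 1 c y) :
    T3 ε 1 c y ∈ Ioo c (c + 1) := by
  have hT := mapsTo_T3 h (Ioo_subset_Ico_self hy.mem)
  refine ⟨hT.1.lt_of_ne' ?_, hT.2⟩
  have := h.lt_one
  have := hy.mem.1
  have := hy.ne_right
  unfold T3
  split_ifs <;> grind

theorem ne_add_add_of_sub_mem_lattice (hl : l ∉ lattice ε) {y : ℝ} (hy : y - c ∈ lattice ε)
    (a b : ℤ) : y ≠ c + l + (a + b * ε) := by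
  rintro rfl
  have := sub_mem hy (intCast_add_mul_mem_lattice a b)
  rw [show c + l + (a + b * ε) - c - (a + b * ε) = l by ring] at this
  exact hl this

theorem val_step_zero : val ε (step 0) = 1 - ε := by simp [step, val_apply]

theorem val_step_two : val ε (step 2) = -ε := by simp [step, val_apply]

namespace Scaling

variable {S : Scaling ε}

theorem height_step_zero : S.height (step 0) = S.g₀ := by simp [height, step]

theorem height_step_one : S.height (step 1) = S.g₀ + S.g₁ := by simp [height, step]

theorem height_step_two : S.height (step 2) = S.g₁ := by simp [height, step]

theorem Avoids.sturmian_left (h : IsExchange ε l) (hl : l ∉ lattice ε)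
    (hcoset : ∀ y, S.ratio * y - c ∈ lattice ε → y - c ∈ lattice ε) (hc : S.Avoids l c c) :
    S.Avoids 1 c c := by
  have hl₁ := h.lt_one_of_notMem hl
  obtain ⟨-, _, _, _, _, -⟩ := h
  have hΛ₀ := mul_pos S.heightRatio_pos S.g₀_pos
  have hΛ₁ := mul_pos S.heightRatio_pos S.g₁_pos
  rintro y z ⟨⟨hcy, hyc⟩, -, hy⟩ hz hz' heq
  have hlat : y - c ∈ lattice ε := hcoset y ⟨-z, by rw [map_neg]; linarith⟩
  have hleft : y ≠ c + l - 1 + ε := by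
    convert ne_add_add_of_sub_mem_lattice hl hlat (-1) 1 using 1
    push_cast
    ring
  have hright : y ≠ c + l := by simpa using ne_add_add_of_sub_mem_lattice hl hlat 0 0
  rcases hy.lt_or_gt with hy | hy
  · rw [letter3_eq_zero_iff.2 (by linarith), height_step_zero] at hz'
    refine hc y z ⟨⟨hcy, by linarith⟩, hleft, hy.ne⟩ hz (hz'.trans_le ?_) heq
    rcases hleft.lt_or_gt with hyl | hyl
    · rw [letter3_eq_zero_iff.2 hyl, height_step_zero]
    · rw [letter3_eq_one_iff.2 ⟨hyl.le, hy⟩, height_step_one, mul_add]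
      linarith
  rw [(letter3_eq_two_iff le_rfl).2 hy.le, height_step_two] at hz'
  rcases hright.lt_or_gt with hyr | hyr
  · refine hc y z ⟨⟨hcy, hyr⟩, hleft, hy.ne'⟩ hz (hz'.trans_eq ?_) heq
    rw [(letter3_eq_two_iff hl₁.le).2 hy.le, height_step_two]
  · -- Beyond `c + l`, use the point of the middle interval whose first half-step leads to `y`.
    refine hc (y - (1 - ε)) (z + S.hom (step 0)) ⟨⟨by linarith, by linarith⟩, fun h => ?_,
      fun h => ?_⟩ ?_ ?_ ?_
    · linarith
    · linarith
    · rw [map_add, height_hom, height_step_zero]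
      linarith
    · rw [letter3_eq_one_iff.2 ⟨by linarith, by linarith⟩, map_add, height_hom, height_step_zero,
        height_step_one]
      linarith
    · rw [map_add, S.val_hom, val_step_zero, ← heq]
      ring

theorem Avoids.sturmian_right (h : IsExchange ε l) (hl : l ∉ lattice ε)
    (hcoset : ∀ y, S.ratio * y - (c + l) ∈ lattice ε → y - (c + l) ∈ lattice ε)
    (hcl : S.Avoids l c (c + l)) : S.Avoids 1 (c + l - 1) (c + l) := by
  rw [← avoids_reflect_iff le_rfl, sub_add_cancel]
  refine Avoids.sturmian_left h.one_sub (by rwa [lattice_one_sub]) (fun y hy => ?_)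
    ((avoids_reflect_iff h.length_le_one).2 hcl)
  rw [lattice_one_sub] at hy ⊢
  have hneg : S.ratio * -y - (c + l) ∈ lattice ε := by
    convert neg_mem hy using 1
    simp only [reflect]
    ring
  convert neg_mem (hcoset (-y) hneg) using 1
  ring

theorem Avoids.of_sturmian_left (h : IsExchange ε l) (h0 : 0 ∈ Icc c (c + l))
    (hc : S.Avoids 1 c c) : S.Avoids l c c := by
  have hl := h.length_le_one
  obtain ⟨-, _, _, _, _, -⟩ := h
  rintro y z ⟨⟨hcy, hyc⟩, hleft, hright⟩ hz hz' heq
  have hint : IsInterior ε 1 c y := ⟨⟨hcy, by linarith⟩, fun h => hright (by linarith), hright⟩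
  rcases hleft.lt_or_gt with hyl | hyl
  · rw [letter3_eq_zero_iff.2 hyl] at hz'
    exact hc y z hint hz (by rwa [letter3_eq_zero_iff.2 (by linarith)]) heq
  rcases hright.lt_or_gt with hyr | hyr
  · rw [letter3_eq_one_iff.2 ⟨hyl.le, hyr⟩, height_step_one] at hz'
    have hge : S.heightRatio * S.g₀ ≤ S.height z := by
      by_contra! hlt
      refine hc y z hint hz ?_ heq
      rwa [letter3_eq_zero_iff.2 (by linarith), height_step_zero]
    have heq' : S.ratio * (y + (1 - ε)) + val ε (z - S.hom (step 0)) = c := by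
      rw [map_sub, S.val_hom, val_step_zero, ← heq]
      ring
    have hheight : S.height (z - S.hom (step 0)) = S.height z - S.heightRatio * S.g₀ := by
      rw [map_sub, height_hom, height_step_zero]
    rcases hge.lt_or_eq with hlt | hge
    · refine hc (y + (1 - ε)) _ ⟨⟨by linarith, by linarith⟩, fun h => ?_, fun h => ?_⟩ ?_ ?_ heq'
      · linarith
      · linarith
      · linarith
      · rw [(letter3_eq_two_iff le_rfl).2 (by linarith), height_step_two]
        linarith
    · rw [S.height_injective (a₁ := z - _) (a₂ := 0) (by rw [hheight, map_zero]; linarith),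
        map_zero, add_zero] at heq'
      nlinarith [S.ratio_pos, h0.1, h0.2]
  · rw [(letter3_eq_two_iff hl).2 hyr.le] at hz'
    exact hc y z hint hz (by rwa [(letter3_eq_two_iff le_rfl).2 hyr.le]) heq

theorem Avoids.of_sturmian_right (h : IsExchange ε l) (h0 : 0 ∈ Icc c (c + l))
    (hcl : S.Avoids 1 (c + l - 1) (c + l)) : S.Avoids l c (c + l) := by
  rw [← avoids_reflect_iff le_rfl, sub_add_cancel] at hcl
  rw [← avoids_reflect_iff h.length_le_one]
  exact hcl.of_sturmian_left h.one_sub ⟨by linarith [h0.2], by linarith [h0.1]⟩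

theorem g₀_le_height_of_add_val_eq (h : IsExchange ε 1) {x : ℝ} (hx : x ∈ Ioo c (c + 1)) {z : ℤ × ℤ}
    (hz : 0 < S.height z) (hxz : x + val ε z = c + 1) : S.g₀ ≤ S.height z := by
  have hε := h.pos
  have hε' := h.lt_one
  by_contra! hlt
  have hw₁ : c + ε + val ε (step 0 - z) = x := by
    rw [map_sub, val_step_zero]
    linarith
  have hheight₁ : S.height (step 0 - z) = S.g₀ - S.height z := by rw [map_sub, height_step_zero]
  have hge : S.g₁ ≤ S.height (step 0 - z) := by
    by_contra! hlt'
    have := eq_zero_of_height_lt_height_step (x := c + ε) h S.g₀_pos S.g₁_pos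
      ⟨by linarith, by linarith⟩ (hw₁ ▸ Ioo_subset_Ico_self hx) (z := step 0 - z)
      (hheight₁ ▸ (sub_pos.2 hlt).le)
      (by rwa [(letter3_eq_two_iff le_rfl).2 le_rfl, ← height, height_step_two])
    rw [this, map_zero] at hheight₁
    linarith
  have hw₂ : c + val ε (step 0 - z - step 2) = x := by
    rw [map_sub _ (step 0 - z), val_step_two, ← hw₁]
    ring
  have hheight₂ : S.height (step 0 - z - step 2) = S.g₀ - S.height z - S.g₁ := by
    rw [map_sub, hheight₁, height_step_two]
  have := eq_zero_of_height_lt_height_step (x := c) h S.g₀_pos S.g₁_pos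
    ⟨le_rfl, by linarith⟩ (hw₂ ▸ Ioo_subset_Ico_self hx) (hheight₂ ▸ by linarith)
    (by
      rw [letter3_eq_zero_iff.2 (by linarith), ← height, hheight₂, height_step_zero]
      linarith [S.g₁_pos])
  rw [this, map_zero, add_zero] at hw₂
  exact hx.1.ne hw₂

theorem ratio_mul_mem_Ioo (h0 : 0 ∈ Icc c (c + l)) {x : ℝ} (hx : x ∈ Ioo c (c + l)) :
    S.ratio * x ∈ Ioo c (c + l) := by
  obtain ⟨hc, hcl⟩ := h0
  obtain ⟨hcx, hxc⟩ := hx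
  constructor <;> nlinarith [S.ratio_pos, S.ratio_lt_one]

/-- A path to `c + 1` ends with the translation by `1 - ε` of the discontinuity `c + ε`; replacing
it by the translation by `-ε` leads to `c` instead. -/
theorem Avoids.right_of_left (h : IsExchange ε 1) (h0 : 0 ∈ Icc c (c + 1)) (hc : S.Avoids 1 c c) :
    S.Avoids 1 c (c + 1) := by
  intro y z hy hz hz' heq
  set d := step (letter3 ε 1 c y) with hd
  have hx := ratio_mul_mem_Ioo (S := S) h0 hy.mem
  have hTx := ratio_mul_mem_Ioo (S := S) h0 (hy.T3_mem_Ioo h)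
  rw [T3_eq_add_val, ← hd, mul_add, ← S.val_hom] at hTx
  have hg := g₀_le_height_of_add_val_eq h hx hz heq
  have hw : S.ratio * y + val ε (z - step 0 + step 2) = c := by
    rw [map_add, map_sub, val_step_zero, val_step_two]
    linarith
  have hheight : S.height (z - step 0 + step 2) = S.height z - S.g₀ + S.g₁ := by
    rw [map_add, map_sub, height_step_zero, height_step_two]
  have hge : S.heightRatio * S.height d ≤ S.height (z - step 0 + step 2) := by
    by_contra! hlt
    exact hc y _ hy (by linarith [S.g₁_pos]) hlt hw
  rcases hge.lt_or_eq with hlt | heq'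
  · have hu : c + ε + val ε (S.hom d - (z - step 0)) = S.ratio * y + val ε (S.hom d) := by
      rw [map_sub, map_sub, val_step_zero]
      linarith
    have hheight' : S.height (S.hom d - (z - step 0)) =
        S.heightRatio * S.height d - S.height z + S.g₀ := by
      rw [map_sub, map_sub, height_hom, height_step_zero]
      ring
    have := eq_zero_of_height_lt_height_step (x := c + ε) h S.g₀_pos S.g₁_pos
      ⟨by linarith [h.pos], by linarith [h.lt_one]⟩ (hu ▸ Ioo_subset_Ico_self hTx)
      (z := S.hom d - (z - step 0)) (by rw [← height]; linarith [S.g₀_pos])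
      (by rw [(letter3_eq_two_iff le_rfl).2 le_rfl, ← height, height_step_two]; linarith)
    rw [this, map_zero] at hheight'
    linarith [S.g₀_pos]
  · rw [S.height_injective ((S.height_hom d).trans heq'), hw] at hTx
    exact hTx.1.ne rfl

theorem avoids_one_iff (h : IsExchange ε 1) (h0 : 0 ∈ Icc c (c + 1)) :
    S.Avoids 1 c c ↔ S.Avoids 1 c (c + 1) := by
  refine ⟨fun hc => hc.right_of_left h h0, fun hcl => ?_⟩
  rw [← avoids_reflect_iff le_rfl] at hcl ⊢
  have := hcl.right_of_left h.one_sub ⟨by linarith [h0.2], by linarith [h0.1]⟩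
  rwa [show -(c + 1) + 1 = -c by ring] at this

end Scaling

end BoundaryComparison

section Discrepancy

open MeasureTheory

theorem exists_measurable_coboundary {X : Type*} [MeasurableSpace X] {T : X → X}
    (hT : Measurable T) {f : X → ℝ} (hf : Measurable f) {B : ℝ}
    (hB : ∀ n x, |birkhoffSum T f n x| ≤ B) :
    ∃ G : X → ℝ, Measurable G ∧ (∀ x, |G x| ≤ B) ∧ ∀ x, G x = f x + G (T x) := by
  have hle (x : X) : IsBoundedUnder (· ≤ ·) atTop fun n => birkhoffSum T f n x :=
    isBoundedUnder_of ⟨B, fun n => (abs_le.1 (hB n x)).2⟩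
  have hge (x : X) : IsBoundedUnder (· ≥ ·) atTop fun n => birkhoffSum T f n x :=
    isBoundedUnder_of ⟨-B, fun n => (abs_le.1 (hB n x)).1⟩
  refine ⟨fun x => limsup (fun n => birkhoffSum T f n x) atTop, .limsup fun n => ?_, fun x => ?_,
    fun x => ?_⟩
  · exact Finset.measurable_sum _ fun j _ => hf.comp (hT.iterate j)
  · exact abs_le.2 ⟨le_limsup_of_frequently_le (.of_forall fun n => (abs_le.1 (hB n x)).1) (hle x),
      limsup_le_of_le (hge x).isCoboundedUnder_le (.of_forall fun n => (abs_le.1 (hB n x)).2)⟩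
  · beta_reduce
    rw [← limsup_nat_add _ 1]
    simp only [birkhoffSum_succ']
    exact limsup_const_add atTop _ _ (hle _) (hge _).isCoboundedUnder_le

theorem integral_eq_zero_of_coboundary {X : Type*} [MeasurableSpace X] {μ : Measure X} {T : X → X}
    (hT : MeasurePreserving T μ μ) {f G : X → ℝ} (hG : Integrable G μ)
    (h : ∀ x, G x = f x + G (T x)) : ∫ x, f x ∂μ = 0 := by
  have hcomp : ∫ x, G (T x) ∂μ = ∫ x, G x ∂μ := by
    rw [← integral_map hT.aemeasurable (by rw [hT.map_eq]; exact hG.aestronglyMeasurable),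
      hT.map_eq]
  simp only [← sub_eq_iff_eq_add.2 (h _)]
  have hGT : Integrable (fun x => G (T x)) μ := hT.integrable_comp_of_integrable hG
  rw [integral_sub hG hGT, hcomp, sub_self]

section Fourier

open AddCircle

variable {T : ℝ} [hT : Fact (0 < T)]

theorem fourierCoeff_comp_sub_right (f : AddCircle T → ℂ) (a : AddCircle T) (n : ℤ) :
    fourierCoeff (fun x => f (x - a)) n = fourier (-n) a * fourierCoeff f n := by
  rw [fourierCoeff, ← integral_add_right_eq_self _ a, fourierCoeff, ← integral_const_mul]
  refine integral_congr_ae (.of_forall fun x => ?_)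
  simp only [add_sub_cancel_right, fourier_apply, zsmul_add, toCircle_add, Circle.coe_mul,
    smul_eq_mul]
  ring

theorem exists_fourierCoeff_ne_zero {f : AddCircle T → ℂ} (hf : MemLp f 2 haarAddCircle)
    (hnorm : ∀ x, ‖f x‖ = 1) : ∃ n, fourierCoeff f n ≠ 0 := by
  by_contra! hzero
  have hparseval := tsum_sq_fourierCoeff hf.toLp
  simp only [fourierCoeff_congr_ae hf.coeFn_toLp, hzero, norm_zero, ne_eq, OfNat.ofNat_ne_zero,
    not_false_eq_true, zero_pow, tsum_zero] at hparseval
  rw [integral_congr_ae (g := fun _ => 1)] at hparseval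
  · simp at hparseval
  · filter_upwards [hf.coeFn_toLp] with x hx
    rw [hx, hnorm, one_pow]

theorem exists_eq_fourier_of_eigenfunction {f : AddCircle T → ℂ} (hf : Measurable f)
    (hnorm : ∀ x, ‖f x‖ = 1) {a : AddCircle T} {w : ℂ} (h : ∀ x, f x = w * f (x - a)) :
    ∃ n, w = fourier n a := by
  obtain ⟨n, hn⟩ := exists_fourierCoeff_ne_zero
    (.of_bound hf.aestronglyMeasurable 1 (.of_forall fun x => (hnorm x).le)) hnorm
  have hcoeff : fourierCoeff f n = w * (fourier (-n) a * fourierCoeff f n) := by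
    conv_lhs => rw [funext h]
    rw [fourierCoeff.const_mul, fourierCoeff_comp_sub_right]
  have hw : w * fourier (-n) a = 1 := by
    rw [← mul_assoc] at hcoeff
    exact (mul_right_cancel₀ hn ((one_mul _).trans hcoeff)).symm
  refine ⟨n, ?_⟩
  calc w = w * fourier (n + -n) a := by rw [add_neg_cancel, fourier_zero, mul_one]
    _ = fourier n a := by rw [fourier_add, mul_left_comm, hw, mul_one]

end Fourier

variable {ε l : ℝ}

/-- The arc `[l, 1)` of the circle `ℝ / ℤ`. -/
def arc (l : ℝ) : Set UnitAddCircle := {x | l ≤ AddCircle.equivIco 1 0 x}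

theorem coe_mem_arc_iff {x : ℝ} : (x : UnitAddCircle) ∈ arc l ↔ l ≤ Int.fract x := by
  rw [arc, mem_ofPred, AddCircle.coe_equivIco_mk_apply, div_one, mul_one]

theorem measurableSet_arc : MeasurableSet (arc l) :=
  measurableSet_le measurable_const (AddCircle.measurableEquivIco 1 0).measurable.subtype_val

theorem volume_real_arc (hl₀ : 0 < l) (hl₁ : l ≤ 1) : volume.real (arc l) = 1 - l := by
  have hpre : ((↑) : ℝ → UnitAddCircle) ⁻¹' arc l ∩ Ioc 0 (0 + 1) = Ico l 1 := by
    ext x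
    rw [mem_inter_iff, mem_preimage, coe_mem_arc_iff, zero_add]
    constructor
    · rintro ⟨hl, hx₀, hx₁⟩
      rcases hx₁.eq_or_lt with rfl | hx₁
      · rw [Int.fract_one] at hl
        linarith
      · rw [Int.fract_eq_self.2 ⟨hx₀.le, hx₁⟩] at hl
        exact ⟨hl, hx₁⟩
    · rintro ⟨hl, hx₁⟩
      have hx₀ := hl₀.trans_le hl
      exact ⟨by rwa [Int.fract_eq_self.2 ⟨hx₀.le, hx₁⟩], hx₀, hx₁.le⟩
  rw [measureReal_def, ← (UnitAddCircle.measurePreserving_mk 0).measure_preimage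
    measurableSet_arc.nullMeasurableSet, Measure.restrict_apply', hpre, Real.volume_Ico,
    ENNReal.toReal_ofReal (sub_nonneg.2 hl₁)]
  exact measurableSet_Ioc

theorem eventually_coe_mem_arc_iff (hl : l ≤ 1) (x : ℝ) :
    ∀ᶠ t : ℝ in 𝓝[>] x, ((t : UnitAddCircle) ∈ arc l ↔ (x : UnitAddCircle) ∈ arc l) := by
  simp only [coe_mem_arc_iff]
  have hfract {t : ℝ} (ht : t ∈ Ioo x (⌊x⌋ + 1)) : Int.fract t = t - ⌊x⌋ :=
    Int.self_sub_floor t ▸ congrArg (t - ·) (congrArg _ (Int.floor_eq_on_Ico ⌊x⌋ t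
      ⟨(Int.floor_le x).trans ht.1.le, ht.2⟩))
  rcases le_or_gt l (Int.fract x) with h | h
  · filter_upwards [Ioo_mem_nhdsGT (Int.lt_floor_add_one x)] with t ht
    refine iff_of_true ?_ h
    rw [hfract ht]
    linarith [ht.1, Int.self_sub_floor x]
  · filter_upwards [Ioo_mem_nhdsGT (show x < ⌊x⌋ + l by linarith [Int.self_sub_floor x])] with t ht
    refine iff_of_false ?_ h.not_ge
    rw [hfract ⟨ht.1, by linarith [ht.2]⟩]
    linarith [ht.2]

theorem coe_add_intCast (x : ℝ) (m : ℤ) : ((x + m : ℝ) : UnitAddCircle) = x := by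
  rw [AddCircle.coe_add, ← zsmul_one m, AddCircle.coe_zsmul, AddCircle.coe_period, smul_zero,
    add_zero]

theorem iterate_sub_coe (ε x : ℝ) (n : ℕ) :
    (fun y : UnitAddCircle => y - ε)^[n] x = (x - n * ε : ℝ) := by
  induction n with
  | zero => rw [iterate_zero_apply, Nat.cast_zero, zero_mul, sub_zero]
  | succ n ih =>
    rw [iterate_succ_apply', ih, ← AddCircle.coe_sub, Nat.cast_succ, add_one_mul, sub_sub]

theorem exists_nat_sub_mul_mem_Ioo (hε : Irrational ε) (hε₀ : 0 < ε) (hε₁ : ε < 1) (x : ℝ)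
    {p q : ℝ} (hpq : p < q) : ∃ (n : ℕ) (m : ℤ), x - n * ε + m ∈ Ioo p q := by
  obtain ⟨z, hz, hpos⟩ := exists_val_mem_Ioo_and_lt_height hε hε₀ hε₁ one_pos one_pos
    (sub_lt_sub_right hpq x) 0
  have hpos' : 0 ≤ z.1 + z.2 := by
    rw [linearForm_apply, mul_one, mul_one] at hpos
    exact_mod_cast hpos.le
  obtain ⟨n, hn⟩ := Int.eq_ofNat_of_zero_le hpos'
  have hn' : (z.1 + z.2 : ℝ) = n := by exact_mod_cast hn
  have hval : x - n * ε + z.1 = x + val ε z := by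
    rw [← hn', val_apply]
    ring
  exact ⟨n, z.1, by rw [hval]; exact ⟨by linarith [hz.1], by linarith [hz.2]⟩⟩

theorem abs_birkhoffSum_le (hε : Irrational ε) (hε₀ : 0 < ε) (hε₁ : ε < 1)
    {f : UnitAddCircle → ℝ} (hf : ∀ x : ℝ, ∀ᶠ t : ℝ in 𝓝[>] x, f t = f x) {x₀ B : ℝ}
    (hB : ∀ n, |birkhoffSum (fun y => y - (ε : UnitAddCircle)) f n x₀| ≤ B) (n : ℕ)
    (x : UnitAddCircle) : |birkhoffSum (fun y => y - (ε : UnitAddCircle)) f n x| ≤ 2 * B := by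
  obtain ⟨x, rfl⟩ := QuotientAddGroup.mk_surjective x
  have hnear : ∀ᶠ t : ℝ in 𝓝[>] x, ∀ j ∈ Finset.range n, f (t - j * ε : ℝ) = f (x - j * ε : ℝ) := by
    refine (eventually_all_finset _).2 fun j _ => ?_
    have : Tendsto (fun t => t - j * ε) (𝓝[>] x) (𝓝[>] (x - j * ε)) :=
      ((continuous_sub_right _).continuousWithinAt).tendsto_nhdsWithin
        fun t ht => sub_lt_sub_right (mem_Ioi.1 ht) _
    exact this.eventually (hf _)
  obtain ⟨u, hxu, hu⟩ := mem_nhdsGT_iff_exists_Ioo_subset.1 hnear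
  obtain ⟨N, m, hN⟩ := exists_nat_sub_mul_mem_Ioo hε hε₀ hε₁ x₀ hxu
  have hsum : birkhoffSum (fun y => y - (ε : UnitAddCircle)) f n x =
      birkhoffSum (fun y => y - (ε : UnitAddCircle)) f n (x₀ - N * ε : ℝ) := by
    refine Finset.sum_congr rfl fun j hj => ?_
    rw [iterate_sub_coe, iterate_sub_coe, ← hu hN j hj, add_sub_right_comm,
      coe_add_intCast]
  have hadd := birkhoffSum_add (fun y => y - (ε : UnitAddCircle)) f N n x₀
  rw [iterate_sub_coe, ← hsum] at hadd
  rw [show birkhoffSum (fun y => y - (ε : UnitAddCircle)) f n x = _ from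
    (eq_sub_of_add_eq' hadd.symm), two_mul]
  exact (abs_sub _ _).trans (add_le_add (hB _) (hB _))

theorem exists_neg_eq_of_coboundary {θ : ℝ} {A : Set UnitAddCircle} {G : UnitAddCircle → ℝ}
    (hG : Measurable G) (h : ∀ x, G x = A.indicator 1 x - θ + G (x - ε)) :
    ∃ n m : ℤ, -θ = n * ε + m := by
  obtain ⟨n, hn⟩ := exists_eq_fourier_of_eigenfunction (T := 1) (a := ε)
    (f := fun x => Complex.exp ((2 * Real.pi * G x : ℝ) * Complex.I))
    (w := Complex.exp (-θ * (2 * Real.pi * Complex.I))) (by fun_prop)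
    (fun x => Complex.norm_exp_ofReal_mul_I _) fun x => by
      rw [← Complex.exp_add, Complex.exp_eq_exp_iff_exists_int]
      by_cases hx : x ∈ A
      · refine ⟨1, ?_⟩
        rw [h x, indicator_of_mem hx, Pi.one_apply]
        push_cast
        ring
      · refine ⟨0, ?_⟩
        rw [h x, indicator_of_notMem hx]
        push_cast
        ring
  rw [fourier_coe_apply, Complex.exp_eq_exp_iff_exists_int] at hn
  obtain ⟨m, hm⟩ := hn
  refine ⟨n, m, ?_⟩
  have hθ : (-θ : ℂ) = n * ε + m := mul_right_cancel₀ Complex.two_pi_I_ne_zero <| by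
    rw [hm, Complex.ofReal_one]
    ring
  exact_mod_cast hθ

/-- Kesten's theorem for an irrational rotation and an arc. -/
theorem mem_lattice_of_abs_birkhoffSum_le (hε : Irrational ε) (hε₀ : 0 < ε) (hε₁ : ε < 1)
    (hl₀ : 0 < l) (hl₁ : l ≤ 1) {θ x₀ B : ℝ}
    (hB : ∀ n, |birkhoffSum (fun y => y - (ε : UnitAddCircle))
      (fun y => (arc l).indicator 1 y - θ) n x₀| ≤ B) : l ∈ lattice ε := by
  have hmeas : Measurable ((arc l).indicator (1 : UnitAddCircle → ℝ)) :=
    measurable_one.indicator measurableSet_arc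
  obtain ⟨G, hG, hGB, hGT⟩ := exists_measurable_coboundary (measurable_sub_const _)
    (hmeas.sub_const θ) <| abs_birkhoffSum_le hε hε₀ hε₁ (fun x => by
      filter_upwards [eventually_coe_mem_arc_iff hl₁ x] with t ht
      exact congrArg (· - θ) (indicator_eq_indicator ht rfl)) hB
  have hint : Integrable ((arc l).indicator (1 : UnitAddCircle → ℝ)) :=
    (integrable_const 1).indicator measurableSet_arc
  have hθ : 1 - l - θ = 0 := by
    rw [← integral_eq_zero_of_coboundary (measurePreserving_sub_right volume _)
      (.of_bound hG.aestronglyMeasurable _ (.of_forall hGB)) hGT,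
      integral_sub hint (integrable_const θ), integral_indicator_one measurableSet_arc,
      volume_real_arc hl₀ hl₁, integral_const, measureReal_def, UnitAddCircle.measure_univ,
      ENNReal.toReal_one, one_smul]
  obtain ⟨n, m, hn⟩ := exists_neg_eq_of_coboundary hG hGT
  rw [mem_lattice_iff]
  exact ⟨1 + m, n, by push_cast; linarith⟩

end Discrepancy

section Clock

variable {ε l c x : ℝ}

/-- The number of rotations by `-ε` of a circle of length `1` that make up one step of `T3` on each
of the three intervals: `T3` is induced by this rotation. -/
def returnTime : Fin 3 → ℕ := ![1, 2, 1]

theorem linearForm_one_one_step (a : Fin 3) : linearForm 1 1 (step a) = returnTime a := by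
  fin_cases a <;> norm_num [step, returnTime]

theorem val_eq_sub_mul (ε : ℝ) (z : ℤ × ℤ) : val ε z = z.1 - linearForm 1 1 z * ε := by
  rw [val_apply, linearForm_apply]
  ring

theorem linearForm_eq_add_mul_val (ε α β : ℝ) (z : ℤ × ℤ) :
    linearForm α β z = linearForm 1 1 z * (α * ε + β * (1 - ε)) + (α - β) * val ε z := by
  simp only [val_apply, linearForm_apply]
  ring

theorem birkhoffSum_returnTime (h : IsExchange ε l) (hx : x ∈ Ico c (c + l)) (θ : ℝ) :
    birkhoffSum (fun y => y - (ε : UnitAddCircle)) (fun y => (arc l).indicator 1 y - θ)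
      (returnTime (letter3 ε l c x)) (x - c : ℝ) =
      (1 - θ) * returnTime (letter3 ε l c x) - 1 := by
  obtain ⟨-, _, _, _, _, _⟩ := h
  obtain ⟨_, _⟩ := hx
  have hfirst : ((x - c : ℝ) : UnitAddCircle) ∉ arc l := by
    rw [coe_mem_arc_iff, Int.fract_eq_self.2 ⟨by linarith, by linarith⟩]
    linarith
  have hsecond (h₁ : c + l - 1 + ε ≤ x) (h₂ : x < c + ε) :
      ((x - c : ℝ) - ε : UnitAddCircle) ∈ arc l := by
    rw [← AddCircle.coe_sub, ← coe_add_intCast _ 1, coe_mem_arc_iff, Int.cast_one,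
      Int.fract_eq_self.2 ⟨by linarith, by linarith⟩]
    linarith
  generalize ((x - c : ℝ) : UnitAddCircle) = p at *
  unfold letter3 returnTime
  split_ifs with h₁ h₂
  · simp [hfirst]
  · simp [birkhoffSum_succ, hfirst, hsecond (not_lt.1 h₁) h₂]
    ring
  · simp [hfirst]

/-- The number of rotations by `-ε` that make up the first `n` steps of the orbit of `0`. -/
noncomputable def clock (ε l c : ℝ) (n : ℕ) : ℕ :=
  ∑ m ∈ Finset.range n, returnTime (threeIetWordN ε l c m)

theorem clock_succ (n : ℕ) :
    clock ε l c (n + 1) = clock ε l c n + returnTime (threeIetWordN ε l c n) :=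
  Finset.sum_range_succ ..

theorem linearForm_one_one_displacement (n : ℕ) :
    linearForm 1 1 (displacement ε l c 0 n) = clock ε l c n := by
  rw [displacement, clock, map_sum, Nat.cast_sum]
  exact Finset.sum_congr rfl fun m _ => linearForm_one_one_step _

theorem exists_eq_clock_or (ε l c : ℝ) (m : ℕ) :
    ∃ n, m = clock ε l c n ∨ m = clock ε l c n + 1 := by
  have hstep (a : Fin 3) : returnTime a = 1 ∨ returnTime a = 2 := by
    fin_cases a <;> simp [returnTime]
  induction m with
  | zero => exact ⟨0, .inl rfl⟩
  | succ m ih =>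
    obtain ⟨n, rfl | rfl⟩ := ih
    · exact ⟨n, .inr rfl⟩
    · rcases hstep (threeIetWordN ε l c n) with ha | ha
      · exact ⟨n + 1, .inr (by rw [clock_succ, ha])⟩
      · exact ⟨n + 1, .inl (by rw [clock_succ, ha])⟩

theorem iterate_sub_clock (n : ℕ) :
    (fun y : UnitAddCircle => y - ε)^[clock ε l c n] (-c : ℝ) =
      (val ε (displacement ε l c 0 n) - c : ℝ) := by
  rw [iterate_sub_coe, val_eq_sub_mul, linearForm_one_one_displacement,
    ← coe_add_intCast (-c - _) (displacement ε l c 0 n).1]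
  congr 1
  ring

theorem birkhoffSum_clock (h : IsExchange ε l) (h0 : 0 ∈ Ico c (c + l)) (θ : ℝ) (n : ℕ) :
    birkhoffSum (fun y => y - (ε : UnitAddCircle)) (fun y => (arc l).indicator 1 y - θ)
      (clock ε l c n) (-c : ℝ) = (1 - θ) * clock ε l c n - n := by
  induction n with
  | zero => simp [clock]
  | succ n ih =>
    rw [clock_succ, birkhoffSum_add, ih, iterate_sub_clock, threeIetWordN, iterate_T3_zero_eq,
      birkhoffSum_returnTime h (val_displacement_mem h h0 n)]
    push_cast
    ring

theorem abs_birkhoffSum_le_of_clock {f : UnitAddCircle → ℝ} {B C : ℝ} (hC : ∀ y, |f y| ≤ C)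
    (hB : ∀ n, |birkhoffSum (fun y => y - (ε : UnitAddCircle)) f (clock ε l c n) (-c : ℝ)| ≤ B)
    (m : ℕ) : |birkhoffSum (fun y => y - (ε : UnitAddCircle)) f m (-c : ℝ)| ≤ B + C := by
  obtain ⟨n, rfl | rfl⟩ := exists_eq_clock_or ε l c m
  · exact (hB n).trans (le_add_of_nonneg_right ((abs_nonneg _).trans (hC 0)))
  · rw [birkhoffSum_succ]
    exact (abs_add_le _ _).trans (add_le_add (hB n) (hC _))

end Clock

section Linearity

variable {ε l c : ℝ} {k : ℕ → ℕ}

theorem abs_val_displacement_le (h : IsExchange ε l) (h0 : 0 ∈ Ico c (c + l)) (n : ℕ) :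
    |val ε (displacement ε l c 0 n)| ≤ 1 := by
  obtain ⟨_, _⟩ := val_displacement_mem h h0 n
  obtain ⟨_, _⟩ := h0
  have := h.length_le_one
  exact abs_le.2 ⟨by linarith, by linarith⟩

theorem IsSelfSimilar.exists_increment (hk : IsSelfSimilar (threeIetWordN ε l c) k) :
    ∃ E : Fin 3 → ℤ × ℤ, ∀ n, displacement ε l c 0 (k (n + 1)) =
      displacement ε l c 0 (k n) + E (threeIetWordN ε l c n) := by
  have hblock (n : ℕ) : displacement ε l c 0 (k (n + 1)) = displacement ε l c 0 (k n) +
      ∑ i ∈ Finset.range (k (n + 1) - k n), step (threeIetWordN ε l c (k n + i)) := by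
    rw [← Nat.add_sub_cancel' (hk.strictMono.monotone n.le_succ)]
    simp only [displacement, Finset.sum_range_add, add_tsub_cancel_left]
    rfl
  have hfactors : FactorsThrough (fun n => ∑ i ∈ Finset.range (k (n + 1) - k n),
      step (threeIetWordN ε l c (k n + i))) (threeIetWordN ε l c) := fun n m hnm => by
    beta_reduce
    rw [← hk.length_eq hnm]
    exact Finset.sum_congr rfl fun i hi =>
      congrArg step (hk.letter_eq hnm i (Finset.mem_range.1 hi))
  obtain ⟨E, hE⟩ := (factorsThrough_iff _).1 hfactors
  exact ⟨E, fun n => by rw [hblock]; exact congrArg _ (congrFun hE n)⟩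

theorem mem_lattice_of_abs_linearForm_add_clock_le (h : IsExchange ε l)
    (h0 : 0 ∈ Ico c (c + l)) {α β t B : ℝ} (ht : t ≠ 0)
    (hB : ∀ n, |linearForm α β (displacement ε l c 0 n) + t * (clock ε l c n - n)| ≤ B) :
    l ∈ lattice ε := by
  refine mem_lattice_of_abs_birkhoffSum_le h.irrational h.pos h.lt_one
    (h.pos.trans h.lt_length) h.length_le_one (θ := -(α * ε + β * (1 - ε)) / t) (x₀ := -c)
    (abs_birkhoffSum_le_of_clock (l := l) (B := (B + |α - β|) / |t|) (C := 1 + |_|)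
      (fun y => (abs_sub _ _).trans (add_le_add_left ?_ _)) fun n => ?_)
  · by_cases hy : y ∈ arc l <;> simp [hy]
  · rw [birkhoffSum_clock h h0, le_div_iff₀ (abs_pos.2 ht), ← abs_mul]
    calc |((1 - -(α * ε + β * (1 - ε)) / t) * clock ε l c n - n) * t|
        = |linearForm α β (displacement ε l c 0 n) + t * (clock ε l c n - n) -
            (α - β) * val ε (displacement ε l c 0 n)| := by
          rw [linearForm_eq_add_mul_val ε, linearForm_one_one_displacement]
          congr 1
          field_simp
          ring
      _ ≤ B + |α - β| * 1 := by
          refine (abs_sub _ _).trans ?_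
          rw [abs_mul]
          gcongr
          exacts [hB n, abs_val_displacement_le h h0 n]
      _ = B + |α - β| := by rw [mul_one]

theorem increment_one_eq (h : IsExchange ε l) (h0 : 0 ∈ Ico c (c + l)) (hl : l ∉ lattice ε)
    {E : Fin 3 → ℤ × ℤ} (hk : k 0 = 0) (hE : ∀ n, displacement ε l c 0 (k (n + 1)) =
      displacement ε l c 0 (k n) + E (threeIetWordN ε l c n)) : E 1 = E 0 + E 2 := by
  refine val_injective h.irrational (not_not.1 fun hne => hl ?_)
  set t := val ε (E 1) - val ε (E 0) - val ε (E 2) with ht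
  have ht0 : t ≠ 0 := fun ht0 => hne (by rw [map_add]; linarith)
  have hletter (a : Fin 3) : val ε (E a) =
      linearForm (val ε (E 0)) (val ε (E 2)) (step a) + t * (returnTime a - 1) := by
    fin_cases a <;> simp [step, returnTime, ht]; ring
  have hval (n : ℕ) : val ε (displacement ε l c 0 (k n)) =
      linearForm (val ε (E 0)) (val ε (E 2)) (displacement ε l c 0 n) +
        t * (clock ε l c n - n) := by
    induction n with
    | zero => simp [hk, clock]
    | succ n ih =>
      rw [hE, displacement_zero_succ, map_add, map_add, ih, hletter (threeIetWordN ε l c n),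
        clock_succ]
      push_cast
      ring
  exact mem_lattice_of_abs_linearForm_add_clock_le h h0 ht0 fun n =>
    hval n ▸ abs_val_displacement_le h h0 (k n)


theorem exists_additive_increment (h : IsExchange ε l) (h0 : 0 ∈ Ico c (c + l))
    (hl : l = 1 ∨ l ∉ lattice ε) (hk : IsSelfSimilar (threeIetWordN ε l c) k) :
    ∃ E : Fin 3 → ℤ × ℤ, E 1 = E 0 + E 2 ∧ ∀ n, displacement ε l c 0 (k (n + 1)) =
      displacement ε l c 0 (k n) + E (threeIetWordN ε l c n) := by
  obtain ⟨E, hE⟩ := hk.exists_increment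
  rcases hl with rfl | hl
  · refine ⟨![E 0, E 0 + E 2, E 2], rfl, fun n => ?_⟩
    have hn : threeIetWordN ε 1 c n ≠ 1 := fun hn => by
      obtain ⟨_, _⟩ := letter3_eq_one_iff.1 hn
      linarith
    rw [hE]
    generalize threeIetWordN ε 1 c n = a at hn
    fin_cases a <;> simp_all
  · exact ⟨E, increment_one_eq h h0 hl hk.zero hE, hE⟩

theorem exists_displacement_eq_hom (h : IsExchange ε l) (h0 : 0 ∈ Ico c (c + l))
    (hl : l = 1 ∨ l ∉ lattice ε) (hk : IsSelfSimilar (threeIetWordN ε l c) k) :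
    ∃ M : AddMonoid.End (ℤ × ℤ),
      ∀ n, displacement ε l c 0 (k n) = M (displacement ε l c 0 n) := by
  obtain ⟨E, hadd, hE⟩ := exists_additive_increment h h0 hl hk
  let M : AddMonoid.End (ℤ × ℤ) :=
    AddMonoidHom.coprod (zmultiplesHom _ (E 0)) (zmultiplesHom _ (E 2))
  have hM (a : Fin 3) : M (step a) = E a := by
    have happly (z : ℤ × ℤ) : M z = z.1 • E 0 + z.2 • E 2 := rfl
    rw [happly]
    fin_cases a <;> simp [step, hadd]
  refine ⟨M, fun n => ?_⟩
  induction n with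
  | zero => rw [hk.zero, displacement_zero, map_zero]
  | succ n ih => rw [hE, ih, displacement_zero_succ, map_add, hM]

theorem linearForm_eq_mul_val_of_abs_displacement_le {α β B : ℝ}
    (hB : ∀ n, |linearForm α β (displacement ε l c 0 n)| ≤ B)
    (hbdd : ∀ n, |val ε (displacement ε l c 0 n)| ≤ 1) (z : ℤ × ℤ) :
    linearForm α β z = (α - β) * val ε z := by
  suffices hs : α * ε + β * (1 - ε) = 0 by rw [linearForm_eq_add_mul_val ε, hs, mul_zero, zero_add]
  by_contra hs
  obtain ⟨n, hn⟩ := exists_lt_height_displacement (ε := ε) (l := l) (c := c) (x := 0) one_pos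
    one_pos ((B + |α - β|) / |α * ε + β * (1 - ε)|)
  rw [div_lt_iff₀ (abs_pos.2 hs)] at hn
  refine hn.not_ge ?_
  calc linearForm 1 1 (displacement ε l c 0 n) * |α * ε + β * (1 - ε)|
      ≤ |linearForm 1 1 (displacement ε l c 0 n) * (α * ε + β * (1 - ε))| := by
        rw [abs_mul]
        gcongr
        exact le_abs_self _
    _ = |linearForm α β (displacement ε l c 0 n) - (α - β) * val ε (displacement ε l c 0 n)| := by
        rw [linearForm_eq_add_mul_val ε α β, add_sub_cancel_right]
    _ ≤ |linearForm α β (displacement ε l c 0 n)| +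
          |(α - β) * val ε (displacement ε l c 0 n)| := abs_sub _ _
    _ ≤ B + |α - β| * 1 := by
        rw [abs_mul]
        gcongr
        exacts [hB n, hbdd n]
    _ = B + |α - β| := by rw [mul_one]

variable {M : AddMonoid.End (ℤ × ℤ)}

theorem exists_val_hom_eq_mul (h : IsExchange ε l) (h0 : 0 ∈ Ico c (c + l))
    (hM : ∀ n, displacement ε l c 0 (k n) = M (displacement ε l c 0 n)) :
    ∃ r : ℝ, ∀ z, val ε (M z) = r * val ε z := by
  have hlinear (z : ℤ × ℤ) :
      val ε (M z) = linearForm (val ε (M (1, 0))) (val ε (M (0, 1))) z := by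
    have hz : z = z.1 • (1, 0) + z.2 • (0, 1) := by simp
    conv_lhs => rw [hz, map_add, map_add, map_zsmul, map_zsmul, map_zsmul, map_zsmul]
    simp only [linearForm_apply, zsmul_eq_mul]
  exact ⟨_, fun z => (hlinear z).trans (linearForm_eq_mul_val_of_abs_displacement_le
    (fun n => by rw [← hlinear, ← hM]; exact abs_val_displacement_le h h0 _)
    (abs_val_displacement_le h h0) z)⟩

theorem val_displacement_one_ne_zero (hε : Irrational ε) :
    val ε (displacement ε l c 0 1) ≠ 0 := fun h =>
  one_ne_zero <| displacement_injective (ε := ε) (l := l) (c := c) (x := 0) <|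
    val_injective hε (h.trans (map_zero _).symm)

theorem abs_le_one_of_val_hom_eq_mul (h : IsExchange ε l) (h0 : 0 ∈ Ico c (c + l)) {r : ℝ}
    (hM : ∀ n, displacement ε l c 0 (k n) = M (displacement ε l c 0 n))
    (hr : ∀ z, val ε (M z) = r * val ε z) : |r| ≤ 1 := by
  by_contra! hlt
  have hv := val_displacement_one_ne_zero (l := l) (c := c) h.irrational
  obtain ⟨p, hp⟩ := pow_unbounded_of_one_lt |val ε (displacement ε l c 0 1)|⁻¹ hlt
  have hpow := apply_iterate_eq_pow_mul (f := fun n => val ε (displacement ε l c 0 n)) (g := k)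
    (fun n => by rw [hM, hr]) p 1
  refine (abs_val_displacement_le h h0 (k^[p] 1)).not_gt ?_
  rw [hpow, abs_mul, abs_pow]
  exact (inv_lt_iff_one_lt_mul₀ (abs_pos.2 hv)).1 hp

theorem eq_id_of_val_hom_eq_intCast_mul (h : IsExchange ε l) (hk : StrictMono k) {t : ℤ}
    (hM : ∀ n, displacement ε l c 0 (k n) = M (displacement ε l c 0 n))
    (ht : ∀ z, val ε (M z) = t * val ε z) (ht₁ : t ≤ 1) : k = id := by
  have hsmul (z : ℤ × ℤ) : M z = t • z :=
    val_injective h.irrational (by rw [ht, map_zsmul, zsmul_eq_mul])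
  have hmono := strictMono_height_displacement (ε := ε) (l := l) (c := c) (x := 0) one_pos one_pos
  have hpos : 0 < linearForm 1 1 (displacement ε l c 0 1) := by simpa using hmono one_pos
  have hle : linearForm 1 1 (displacement ε l c 0 1) ≤
      t * linearForm 1 1 (displacement ε l c 0 1) := by
    rw [← zsmul_eq_mul, ← map_zsmul, ← hsmul, ← hM]
    exact hmono.monotone (hk.id_le 1)
  have ht' : t = 1 := ht₁.antisymm (by exact_mod_cast (le_mul_iff_one_le_left hpos).1 hle)
  exact funext fun n => displacement_injective (by rw [hM, hsmul, ht', one_smul, id])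

theorem displacement_mono : Monotone (displacement ε l c 0) :=
  monotone_nat_of_le_succ fun n => by
    have (a : Fin 3) : 0 ≤ step a := by revert a; decide
    rw [displacement_zero_succ]
    exact le_add_of_nonneg_right (this _)

theorem hom_step_nonneg (hk : Monotone k)
    (hM : ∀ n, displacement ε l c 0 (k n) = M (displacement ε l c 0 n)) (n : ℕ) :
    0 ≤ M (step (threeIetWordN ε l c n)) := by
  have hn := displacement_mono (ε := ε) (l := l) (c := c) (hk n.le_succ)
  rwa [hM, hM, displacement_zero_succ, map_add, le_add_iff_nonneg_right] at hn

theorem pos_of_mul_sub_eq_mul {r p q : ℝ} {a b : ℤ} (hr : r ∈ Ioo 0 1) (hp : 0 < p) (hq : 0 < q)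
    (hb : 0 ≤ b) (h : (a - r) * p = b * q) : 0 < (b : ℝ) ∧ 0 < a - r := by
  have ha : a - r ≠ 0 := fun ha => by
    have h₀ : 0 < a := by exact_mod_cast hr.1.trans_eq (sub_eq_zero.1 ha).symm
    have h₁ : a < 1 := by exact_mod_cast (sub_eq_zero.1 ha).trans_lt hr.2
    omega
  have hb' : (b : ℝ) ≠ 0 := fun hb' => mul_ne_zero ha hp.ne' (by rw [h, hb', zero_mul])
  have hpos : 0 < (b : ℝ) := (Int.cast_nonneg hb).lt_of_ne' hb'
  exact ⟨hpos, (pos_iff_pos_of_mul_pos (h ▸ mul_pos hpos hq)).2 hp⟩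

/-- With `M = (a m; b n)`, the height form is the left eigenvector `(b, n - r)` of `M` for its
second eigenvalue `a + n - r`. -/
theorem exists_scaling_of_nonneg (hε : Irrational ε) (hε₀ : 0 < ε) (hε₁ : ε < 1) {r : ℝ}
    (hr : r ∈ Ioo 0 1) (hM : ∀ z, val ε (M z) = r * val ε z) (h₀ : 0 ≤ M (1, 0))
    (h₁ : 0 ≤ M (0, 1)) : ∃ S : Scaling ε, S.hom = M := by
  obtain ⟨a, b, hab⟩ : ∃ a b, M (1, 0) = (a, b) := ⟨_, _, rfl⟩
  obtain ⟨m, n, hmn⟩ : ∃ m n, M (0, 1) = (m, n) := ⟨_, _, rfl⟩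
  have hcol₀ := hM (1, 0)
  have hcol₁ := hM (0, 1)
  simp only [hab, hmn, val_apply, Int.cast_zero, Int.cast_one] at hcol₀ hcol₁
  obtain ⟨hb, ha⟩ := pos_of_mul_sub_eq_mul (p := 1 - ε) (q := ε) (a := a) (b := b) hr
    (by linarith) hε₀ (by rw [hab] at h₀; exact h₀.2) (by linarith)
  obtain ⟨-, hn⟩ := pos_of_mul_sub_eq_mul (p := ε) (q := 1 - ε) (a := n) (b := m) hr
    hε₀ (by linarith) (by rw [hmn] at h₁; exact h₁.1) (by linarith)
  have hMz (z : ℤ × ℤ) : M z = (z.1 * a + z.2 * m, z.1 * b + z.2 * n) := by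
    have hz : z = z.1 • (1, 0) + z.2 • (0, 1) := by simp
    conv_lhs => rw [hz, map_add, map_zsmul, map_zsmul, hab, hmn]
    simp
  have hdet : (b : ℝ) * m = (a - r) * (n - r) := by
    have hε' : ε * (1 - ε) ≠ 0 := mul_ne_zero hε₀.ne' (by linarith)
    refine mul_right_cancel₀ hε' ?_
    linear_combination -m * (1 - ε) * hcol₀ + (a - r) * (1 - ε) * hcol₁
  refine ⟨⟨M, r, a + n - r, b, n - r, hM, fun z => ?_, hr.1, hr.2, by linarith [hr.1], hb, hn,
    (injective_iff_map_eq_zero _).2 fun z hz => ?_⟩, rfl⟩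
  · simp only [hMz, linearForm_apply]
    push_cast
    linear_combination (z.2 : ℝ) * hdet
  · rw [linearForm_apply] at hz
    have hval : val ε (z.1 * b + z.2 * n - z.2 * a, -(z.2 * b)) = 0 := by
      rw [val_apply]
      push_cast
      linear_combination (1 - ε) * hz - z.2 * hcol₀
    have := val_injective hε (hval.trans (map_zero _).symm)
    have hb' : b ≠ 0 := by exact_mod_cast hb.ne'
    obtain ⟨hfst, hsnd⟩ := Prod.ext_iff.1 this
    have hz₂ : z.2 = 0 := by simpa [hb'] using hsnd
    have hz₁ : z.1 = 0 := by simpa [hb', hz₂] using hfst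
    exact Prod.ext hz₁ hz₂

theorem exists_Ioo_letter3_eq (h : IsExchange ε l) {a : Fin 3} (ha : a = 1 → l < 1) :
    ∃ p q, p < q ∧ c ≤ p ∧ q ≤ c + l ∧ ∀ x ∈ Ioo p q, letter3 ε l c x = a := by
  obtain ⟨-, _, _, _, _, _⟩ := id h
  match a with
  | 0 => exact ⟨c, c + l - 1 + ε, by linarith, le_rfl, by linarith,
      fun x hx => letter3_eq_zero_iff.2 hx.2⟩
  | 1 => exact ⟨c + l - 1 + ε, c + ε, by linarith [ha rfl], by linarith, by linarith,
      fun x hx => letter3_eq_one_iff.2 ⟨hx.1.le, hx.2⟩⟩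
  | 2 => exact ⟨c + ε, c + l, by linarith, by linarith, le_rfl,
      fun x hx => (letter3_eq_two_iff h.length_le_one).2 hx.1.le⟩

theorem exists_threeIetWordN_eq (h : IsExchange ε l) (h0 : 0 ∈ Ico c (c + l)) {a : Fin 3}
    (ha : a = 1 → l < 1) : ∃ n, threeIetWordN ε l c n = a := by
  obtain ⟨p, q, hpq, hp, hq, hletter⟩ := exists_Ioo_letter3_eq (c := c) h ha
  obtain ⟨n, hn⟩ := exists_val_displacement_mem_Ioo h h0 hpq hp hq
  exact ⟨n, by rw [threeIetWordN, iterate_T3_zero_eq, hletter _ hn]⟩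

theorem exists_renormalizes_of_isSelfSimilar (h : IsExchange ε l) (h0 : 0 ∈ Ico c (c + l))
    (hl : l = 1 ∨ l ∉ lattice ε) (hk : IsSelfSimilar (threeIetWordN ε l c) k) (hne : k ≠ id) :
    ∃ S : Scaling ε, S.Renormalizes l c := by
  obtain ⟨M, hM⟩ := exists_displacement_eq_hom h h0 hl hk
  obtain ⟨r, hr⟩ := exists_val_hom_eq_mul h h0 hM
  have hr₁ : |r| ≤ 1 := abs_le_one_of_val_hom_eq_mul h h0 hM hr
  have hint (t : ℤ) (ht : t ≤ 1) : r ≠ t := fun hrt =>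
    hne (eq_id_of_val_hom_eq_intCast_mul h hk.strictMono hM (hrt ▸ hr) ht)
  have hsq : r ^ 2 ∈ Ioo (0 : ℝ) 1 := by
    have h₀ := hint 0 zero_le_one
    have h₁ := hint 1 le_rfl
    have h₂ := hint (-1) (by decide)
    push_cast at h₀ h₁ h₂
    refine ⟨by positivity, (sq_lt_one_iff_abs_lt_one r).2 (hr₁.lt_of_ne fun h => ?_)⟩
    exact (eq_or_eq_neg_of_abs_eq h).elim h₁ h₂
  have hM₂ (n : ℕ) : displacement ε l c 0 ((k ∘ k) n) = (M * M) (displacement ε l c 0 n) := by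
    rw [comp_apply, hM, hM]
    rfl
  have hnonneg {a : Fin 3} (ha : a = 1 → l < 1) : 0 ≤ (M * M) (step a) := by
    obtain ⟨n, rfl⟩ := exists_threeIetWordN_eq h h0 ha
    exact hom_step_nonneg (hk.comp hk).strictMono.monotone hM₂ n
  obtain ⟨S, hS⟩ := exists_scaling_of_nonneg (M := M * M) h.irrational h.pos h.lt_one hsq
    (fun z => (hr (M z)).trans (by rw [hr, sq, mul_assoc]))
    (hnonneg (a := 0) (absurd · (by decide))) (hnonneg (a := 2) (absurd · (by decide)))
  exact ⟨S, k ∘ k, hk.comp hk, hS ▸ hM₂⟩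

end Linearity

section Units

open Matrix

theorem sq_sub_trace_mul_add_det_eq_zero {K : Type*} [Field K] {A : Matrix (Fin 2) (Fin 2) K}
    {v : Fin 2 → K} {x : K} (hv : v ≠ 0) (h : A *ᵥ v = x • v) :
    x ^ 2 - A.trace * x + A.det = 0 := by
  have hdet : (A - scalar (Fin 2) x).det = 0 :=
    exists_mulVec_eq_zero_iff.1 ⟨v, hv, by
      rw [sub_mulVec, h, scalar_apply, diagonal_const_mulVec, sub_self]⟩
  simp only [scalar_apply, det_fin_two, Matrix.sub_apply, diagonal_apply_eq, ne_eq, zero_ne_one,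
    not_false_eq_true, diagonal_apply_ne, sub_zero, one_ne_zero] at hdet
  rw [det_fin_two, trace_fin_two]
  linear_combination hdet

variable {ε x y : ℝ}

theorem exists_mulVec_eq_smul (hx : ∀ y ∈ lattice ε, x * y ∈ lattice ε) :
    ∃ A : Matrix (Fin 2) (Fin 2) ℤ,
      (Int.castRingHom ℝ).mapMatrix A *ᵥ ![1 - ε, -ε] = x • ![1 - ε, -ε] := by
  obtain ⟨⟨a, b⟩, hab⟩ := hx _ (val_mem_lattice (1, 0))
  obtain ⟨⟨m, n⟩, hmn⟩ := hx _ (val_mem_lattice (0, 1))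
  simp only [val_apply, Int.cast_one, one_mul, Int.cast_zero, zero_mul, add_zero, zero_add]
    at hab hmn
  refine ⟨!![a, b; m, n], ?_⟩
  ext i
  fin_cases i <;> simp [mulVec, dotProduct, Fin.sum_univ_two] <;> linarith

theorem eq_one_of_mulVec_eq (hε : Irrational ε) {A : Matrix (Fin 2) (Fin 2) ℤ}
    (hA : (Int.castRingHom ℝ).mapMatrix A *ᵥ ![1 - ε, -ε] = ![1 - ε, -ε]) : A = 1 := by
  have h₀ : val ε (A 0 0, A 0 1) = val ε (1, 0) := by
    simpa [mulVec, dotProduct, Fin.sum_univ_two, val_apply] using congrFun hA 0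
  have h₁ : val ε (A 1 0, A 1 1) = val ε (0, 1) := by
    simpa [mulVec, dotProduct, Fin.sum_univ_two, val_apply] using congrFun hA 1
  obtain ⟨h₀₀, h₀₁⟩ := Prod.ext_iff.1 (val_injective hε h₀)
  obtain ⟨h₁₀, h₁₁⟩ := Prod.ext_iff.1 (val_injective hε h₁)
  ext i j
  fin_cases i <;> fin_cases j <;> assumption

theorem exists_sq_add_inv_sq_eq_intCast (hε : Irrational ε) (hx₀ : x ≠ 0)
    (hx : ∀ y, x * y ∈ lattice ε ↔ y ∈ lattice ε) : ∃ N : ℤ, x ^ 2 + (x ^ 2)⁻¹ = N := by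
  obtain ⟨A, hA⟩ := exists_mulVec_eq_smul fun y => (hx y).2
  obtain ⟨B, hB⟩ := exists_mulVec_eq_smul (x := x⁻¹) fun y hy =>
    (hx _).1 (by rwa [mul_inv_cancel_left₀ hx₀])
  have hAB : A * B = 1 := eq_one_of_mulVec_eq hε (by
    rw [map_mul, ← mulVec_mulVec, hB, mulVec_smul, hA, inv_smul_smul₀ hx₀])
  have hdet : A.det ^ 2 = 1 :=
    Int.isUnit_sq (IsUnit.of_mul_eq_one B.det (by rw [← det_mul, hAB, det_one]))
  have hdet' : (A.det : ℝ) ^ 2 = 1 := by exact_mod_cast hdet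
  have hchar := sq_sub_trace_mul_add_det_eq_zero
    (fun hv => hε.ne_zero (neg_eq_zero.1 (congrFun hv 1))) hA
  rw [← RingHom.map_det, RingHom.mapMatrix_apply, ← AddMonoidHom.map_trace] at hchar
  rw [Int.coe_castRingHom] at hchar
  generalize A.trace = τ, A.det = δ at hchar hdet'
  refine ⟨τ ^ 2 - 2 * δ, ?_⟩
  push_cast
  field_simp
  linear_combination (x ^ 2 + τ * x + δ) * hchar - hdet'

/-- The logarithms of the positive reals that multiply `lattice ε` onto itself. -/
def logUnits (ε : ℝ) : AddSubgroup ℝ where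
  carrier := {t | ∀ y, Real.exp t * y ∈ lattice ε ↔ y ∈ lattice ε}
  zero_mem' y := by rw [Real.exp_zero, one_mul]
  add_mem' {s t} hs ht y := by rw [Real.exp_add, mul_assoc, hs, ht]
  neg_mem' {t} ht y := by rw [← ht, ← mul_assoc, ← Real.exp_add, add_neg_cancel, Real.exp_zero,
    one_mul]

theorem not_dense_logUnits (hε : Irrational ε) : ¬Dense (logUnits ε : Set ℝ) := fun hdense => by
  have hcont : Continuous fun t => Real.exp t ^ 2 + (Real.exp t ^ 2)⁻¹ := by
    have (t : ℝ) : Real.exp t ^ 2 ≠ 0 := by positivity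
    fun_prop (disch := assumption)
  have hlog : Real.exp (Real.log 2 / 2) ^ 2 = 2 := by
    rw [← Real.exp_nat_mul, Nat.cast_two, mul_div_cancel₀ _ two_ne_zero, Real.exp_log two_pos]
  obtain ⟨t, ht, h₂, h₃⟩ := hdense.exists_mem_open (isOpen_Ioo (a := 2) (b := 3) |>.preimage hcont)
    ⟨Real.log 2 / 2, by rw [mem_preimage, hlog]; norm_num⟩
  obtain ⟨N, hN⟩ := exists_sq_add_inv_sq_eq_intCast hε (Real.exp_ne_zero t) ht
  beta_reduce at h₂ h₃
  rw [hN] at h₂ h₃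
  norm_cast at h₂ h₃
  omega

theorem pow_natAbs_eq_pow_natAbs {a : ℝ} {m n : ℤ} (hx : x ∈ Ioo 0 1) (hy : y ∈ Ioo 0 1)
    (hm : m * a = Real.log x) (hn : n * a = Real.log y) : x ^ n.natAbs = y ^ m.natAbs := by
  have habs {t : ℝ} {k : ℤ} (ht : t ∈ Ioo 0 1) (hk : k * a = Real.log t) :
      Real.log t = -(|(k : ℝ)| * |a|) := by
    rw [← abs_mul, hk, abs_of_neg (Real.log_neg ht.1 ht.2), neg_neg]
  refine Real.log_injOn_pos (pow_pos hx.1 _) (pow_pos hy.1 _) ?_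
  rw [Real.log_pow, Real.log_pow, habs hx hm, habs hy hn, Nat.cast_natAbs, Nat.cast_natAbs,
    Int.cast_abs, Int.cast_abs]
  ring

theorem exists_pow_eq_pow (hε : Irrational ε) (hx : x ∈ Ioo 0 1) (hy : y ∈ Ioo 0 1)
    (hxL : ∀ z, x * z ∈ lattice ε ↔ z ∈ lattice ε)
    (hyL : ∀ z, y * z ∈ lattice ε ↔ z ∈ lattice ε) :
    ∃ p ≠ 0, ∃ q ≠ 0, x ^ p = y ^ q := by
  obtain ⟨a, ha⟩ := (logUnits ε).dense_or_cyclic.resolve_left (not_dense_logUnits hε)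
  have hlog {t : ℝ} (ht : t ∈ Ioo 0 1) (htL : ∀ z, t * z ∈ lattice ε ↔ z ∈ lattice ε) :
      ∃ m : ℤ, m * a = Real.log t ∧ m.natAbs ≠ 0 := by
    have hmem : Real.log t ∈ logUnits ε := fun z => by rw [Real.exp_log ht.1]; exact htL z
    rw [ha, AddSubgroup.mem_closure_singleton] at hmem
    obtain ⟨m, hm⟩ := hmem
    rw [zsmul_eq_mul] at hm
    refine ⟨m, hm, Int.natAbs_ne_zero.2 ?_⟩
    rintro rfl
    exact (Real.log_neg ht.1 ht.2).ne (by rw [← hm, Int.cast_zero, zero_mul])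
  obtain ⟨m, hm, hm₀⟩ := hlog hx hxL
  obtain ⟨n, hn, hn₀⟩ := hlog hy hyL
  exact ⟨_, hn₀, _, hm₀, pow_natAbs_eq_pow_natAbs hx hy hm hn⟩

theorem Scaling.Avoids.mul_mem_lattice_iff {S : Scaling ε} {c : ℝ} (h : IsExchange ε 1)
    (h0 : 0 ∈ Icc c (c + 1)) (hc : S.Avoids 1 c c) (y : ℝ) :
    S.ratio * y ∈ lattice ε ↔ y ∈ lattice ε := by
  refine ⟨fun hy => ?_, S.mul_mem_lattice⟩
  have hcoset (x : ℝ) (hx : S.ratio * x - c ∈ lattice ε) : x - c ∈ lattice ε := by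
    refine (hc.sub_mem_lattice_or h h0 (.inl rfl) hx).elim id fun hx => ?_
    simpa only [← sub_sub, sub_add_cancel] using add_mem hx one_mem_lattice
  have hfix : S.ratio * (c / S.ratio) = c := mul_div_cancel₀ _ S.ratio_pos.ne'
  have h₀ := hcoset (c / S.ratio) (by rw [hfix, sub_self]; exact zero_mem _)
  have h₁ := hcoset (y + c / S.ratio) (by rwa [mul_add, hfix, add_sub_cancel_right])
  rwa [add_sub_assoc, AddSubgroup.add_mem_cancel_right _ h₀] at h₁

end Units

section Primitivity

variable {ε l c : ℝ} {k : ℕ → ℕ} {S : Scaling ε}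

theorem ne_id_of_displacement_eq_hom (hε : Irrational ε)
    (hk : ∀ n, displacement ε l c 0 (k n) = S.hom (displacement ε l c 0 n)) : k ≠ id := by
  rintro rfl
  have hfix := congrArg (val ε) (hk 1)
  rw [id, S.val_hom] at hfix
  exact S.ratio_lt_one.ne ((right_eq_mul₀ (val_displacement_one_ne_zero hε)).1 hfix)

namespace Scaling

theorem exists_displacement_eq_hom_add (h : IsExchange ε l) (h0 : 0 ∈ Ico c (c + l))
    (hk : ∀ n, displacement ε l c 0 (k n) = S.hom (displacement ε l c 0 n)) {n : ℕ} {z : ℤ × ℤ}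
    (hz : 0 < S.height z) (hz' : S.height z < S.heightRatio * min S.g₀ S.g₁)
    (hval : S.ratio * val ε (displacement ε l c 0 n) + val ε z ∈ Ico c (c + l)) :
    ∃ i < k (n + 1) - k n, displacement ε l c 0 (k n + i) = S.hom (displacement ε l c 0 n) + z := by
  have hmono := S.strictMono_height_displacement (l := l) (c := c) (x := 0)
  have hnonneg := mul_nonneg S.heightRatio_pos.le
    (S.height_displacement_nonneg (l := l) (c := c) (x := 0) n)
  obtain ⟨m, hm⟩ := S.exists_displacement_eq h h0 (z := S.hom (displacement ε l c 0 n) + z)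
    (by rwa [zero_add, map_add, S.val_hom]) (by rw [map_add, height_hom]; linarith)
  have hlt : k n < m := hmono.lt_iff_lt.1 (by
    simp only [hm, hk, map_add]
    linarith)
  have hlt' : m < k (n + 1) := hmono.lt_iff_lt.1 (by
    have := mul_le_mul_of_nonneg_left
      (min_le_height_step S.g₀_pos S.g₁_pos (threeIetWordN ε l c n)) S.heightRatio_pos.le
    simp only [hm, hk, displacement_zero_succ, map_add, height_hom]
    exact add_lt_add_right (hz'.trans_le this) _)
  exact ⟨m - k n, by omega, by rw [Nat.add_sub_cancel' hlt.le, hm]⟩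

theorem eventually_exists_letter3_eq (h : IsExchange ε l) (hl : l < 1)
    (hS : 1 < S.heightRatio) (c : ℝ) (a : Fin 3) :
    ∀ᶠ r in atTop, ∃ z, 0 < S.height z ∧ S.height z < S.heightRatio ^ r * min S.g₀ S.g₁ ∧
      ∀ x, |x| ≤ 1 → S.ratio ^ r * x + val ε z ∈ Ico c (c + l) ∧
        letter3 ε l c (S.ratio ^ r * x + val ε z) = a := by
  obtain ⟨p, q, hpq, hp, hq, hletter⟩ := exists_Ioo_letter3_eq (c := c) h fun _ : a = 1 => hl
  obtain ⟨z, ⟨hpz, hzq⟩, hz⟩ := exists_val_mem_Ioo_and_lt_height h.irrational h.pos h.lt_one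
    S.g₀_pos S.g₁_pos hpq 0
  have hheight : Tendsto (fun r => S.heightRatio ^ r * min S.g₀ S.g₁) atTop atTop :=
    (tendsto_pow_atTop_atTop_of_one_lt hS).atTop_mul_const (lt_min S.g₀_pos S.g₁_pos)
  have hratio := tendsto_pow_atTop_nhds_zero_of_lt_one S.ratio_pos.le S.ratio_lt_one
  filter_upwards [hheight.eventually_gt_atTop (S.height z),
    hratio.eventually_lt_const (sub_pos.2 hpz), hratio.eventually_lt_const (sub_pos.2 hzq)]
    with r hr hrp hrq
  refine ⟨z, hz, hr, fun x hx => ?_⟩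
  have hrx : |S.ratio ^ r * x| ≤ S.ratio ^ r := by
    have := pow_pos S.ratio_pos r
    rw [abs_mul, abs_of_pos this]
    exact mul_le_of_le_one_right this.le hx
  have hmem : S.ratio ^ r * x + val ε z ∈ Ioo p q := by
    obtain ⟨_, _⟩ := abs_le.1 hrx
    constructor <;> linarith
  exact ⟨⟨hp.trans hmem.1.le, hmem.2.trans_le hq⟩, hletter _ hmem⟩

theorem Renormalizes.exists_forall_exists_letter_eq (h : IsExchange ε l) (hl : l < 1)
    (h0 : 0 ∈ Ico c (c + l)) (hS : S.Renormalizes l c) :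
    ∃ k, IsSelfSimilar (threeIetWordN ε l c) k ∧
      ∀ n a, ∃ i < k (n + 1) - k n, threeIetWordN ε l c (k n + i) = a := by
  obtain ⟨r, hr, hr₀⟩ := ((eventually_all.2 (S.eventually_exists_letter3_eq h hl
    (hS.one_lt_heightRatio h) c)).and (eventually_ne_atTop 0)).exists
  obtain ⟨k, hk, hkS⟩ := hS.pow r hr₀
  refine ⟨k, hk, fun n a => ?_⟩
  obtain ⟨z, hz, hz', hletter⟩ := hr a
  obtain ⟨hmem, ha⟩ := hletter _ (abs_val_displacement_le h h0 n)
  obtain ⟨i, hi, hki⟩ := exists_displacement_eq_hom_add h h0 hkS hz hz' hmem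
  refine ⟨i, hi, ?_⟩
  rw [threeIetWordN, iterate_T3_zero_eq, hki, map_add, Scaling.val_hom]
  exact ha

end Scaling

theorem exists_primitive_subst_iff (h : IsExchange ε l) (h0 : 0 ∈ Ico c (c + l))
    (hl : l ∉ lattice ε) :
    (∃ φ : Fin 3 → List (Fin 3), (∀ a, φ a ≠ []) ∧ IsPrimitiveSubst φ ∧
      IsFixedPointSubst φ (threeIetWordN ε l c)) ↔ ∃ S : Scaling ε, S.Renormalizes l c := by
  have hl₁ : l < 1 := h.lt_one_of_notMem hl
  have hsurj : Surjective (threeIetWordN ε l c) := fun a =>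
    exists_threeIetWordN_eq h h0 fun _ => hl₁
  constructor
  · rintro ⟨φ, hne, hprim, hfix⟩
    obtain ⟨k, hk, hkid⟩ := (exists_nontrivial_subst_iff hsurj).1
      ⟨φ, hne, IsPrimitiveSubst.not_forall_eq_singleton hprim, hfix⟩
    exact exists_renormalizes_of_isSelfSimilar h h0 (.inr hl) hk hkid
  · rintro ⟨S, hS⟩
    obtain ⟨k, hk, hblock⟩ := hS.exists_forall_exists_letter_eq h hl₁ h0
    exact ⟨blockSubst _ k hsurj, blockSubst_ne_nil hk.strictMono,
      isPrimitiveSubst_blockSubst hblock, isFixedPointSubst_blockSubst hk⟩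

end Primitivity

section Sturmian

variable {ε l c : ℝ}

theorem T3_one_of_lt {x : ℝ} (hx : x < c + ε) : T3 ε 1 c x = x + 1 - ε :=
  if_pos (by rwa [add_sub_cancel_right])

theorem T3_one_of_ge {x : ℝ} (hx : c + ε ≤ x) : T3 ε 1 c x = x - ε := by
  rw [T3, if_neg (by rwa [add_sub_cancel_right, not_lt]), if_neg hx.not_gt]

/-- The letter coding the position of `x` for the exchange `T3 ε 1 c` of two intervals. -/
noncomputable def sturmianLetter (ε c x : ℝ) : Fin 2 := if x < c + ε then 0 else 1

/-- The Sturmian word coding the orbit of `0` under the exchange `T3 ε 1 c` of two intervals. -/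
noncomputable def sturmianWord (ε c : ℝ) (n : ℕ) : Fin 2 :=
  sturmianLetter ε c ((T3 ε 1 c)^[n] 0)

theorem sturmianLetter_of_lt {x : ℝ} (hx : x < c + ε) : sturmianLetter ε c x = 0 := if_pos hx

theorem sturmianLetter_of_ge {x : ℝ} (hx : c + ε ≤ x) : sturmianLetter ε c x = 1 :=
  if_neg hx.not_gt

theorem threeIetWordN_one (n : ℕ) : threeIetWordN ε 1 c n = ![0, 2] (sturmianWord ε c n) := by
  unfold threeIetWordN sturmianWord letter3 sturmianLetter
  rw [add_sub_cancel_right]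
  split_ifs <;> rfl

theorem zero_two_injective : Injective (![0, 2] : Fin 2 → Fin 3) := by decide

theorem threeIetWordN_one_eq_iff (m n : ℕ) :
    threeIetWordN ε 1 c m = threeIetWordN ε 1 c n ↔ sturmianWord ε c m = sturmianWord ε c n := by
  rw [threeIetWordN_one, threeIetWordN_one, zero_two_injective.eq_iff]

theorem sturmianWord_surjective (h : IsExchange ε 1) (h0 : 0 ∈ Ico c (c + 1)) :
    Surjective (sturmianWord ε c) := by
  intro a
  have ha : (![0, 2] : Fin 2 → Fin 3) a ≠ 1 := by decide +revert
  obtain ⟨n, hn⟩ := exists_threeIetWordN_eq h h0 (absurd · ha)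
  exact ⟨n, zero_two_injective ((threeIetWordN_one n).symm.trans hn)⟩

theorem exists_subst_sturmianWord_iff (h : IsExchange ε 1) (h0 : 0 ∈ Ico c (c + 1)) :
    (∃ ψ : Fin 2 → List (Fin 2), (∀ a, ψ a ≠ []) ∧ (¬ ∀ a, ψ a = [a]) ∧
      IsFixedPointSubst ψ (sturmianWord ε c)) ↔ ∃ S : Scaling ε, S.Renormalizes 1 c := by
  rw [exists_nontrivial_subst_iff (sturmianWord_surjective h h0)]
  constructor
  · rintro ⟨k, hk, hne⟩
    exact exists_renormalizes_of_isSelfSimilar h h0 (.inl rfl)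
      (hk.congr fun m n => (threeIetWordN_one_eq_iff m n).symm) hne
  · rintro ⟨S, k, hk, hkS⟩
    exact ⟨k, hk.congr threeIetWordN_one_eq_iff, ne_id_of_displacement_eq_hom h.irrational hkS⟩

theorem isConcatImage_sigma01 (h : IsExchange ε l) (h0 : 0 ∈ Ico c (c + l)) :
    IsConcatImage sigma01 (threeIetWordN ε l c) (sturmianWord ε c) := by
  refine isConcatImage_of_induced (mapsTo_T3 h) (fun x hx => ?_) h0
  obtain ⟨-, _, _, _, _, _⟩ := h
  obtain ⟨_, _⟩ := hx
  rw [letter3, T3]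
  split_ifs with hx₀ hx₁
  · have hx : x < c + ε := by linarith
    exact ⟨sturmianLetter_of_lt hx, T3_one_of_lt hx⟩
  · have hTx : c + ε ≤ T3 ε 1 c x := by rw [T3_one_of_lt hx₁]; linarith
    exact ⟨sturmianLetter_of_lt hx₁, sturmianLetter_of_ge hTx,
      by rw [ReadsWord, T3_one_of_ge hTx, T3_one_of_lt hx₁]; ring⟩
  · have hx := not_lt.1 hx₁
    exact ⟨sturmianLetter_of_ge hx, T3_one_of_ge hx⟩

theorem isConcatImage_sigma10 (h : IsExchange ε l) (h0 : 0 ∈ Ico c (c + l)) :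
    IsConcatImage sigma10 (threeIetWordN ε l c) (sturmianWord ε (c + l - 1)) := by
  refine isConcatImage_of_induced (mapsTo_T3 h) (fun x hx => ?_) h0
  obtain ⟨-, _, _, _, _, _⟩ := h
  obtain ⟨_, _⟩ := hx
  rw [letter3, T3]
  split_ifs with hx₀ hx₁
  · exact ⟨sturmianLetter_of_lt hx₀, T3_one_of_lt hx₀⟩
  · have hx := not_lt.1 hx₀
    have hTx : T3 ε 1 (c + l - 1) x < c + l - 1 + ε := by rw [T3_one_of_ge hx]; linarith
    exact ⟨sturmianLetter_of_ge hx, sturmianLetter_of_lt hTx,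
      by rw [ReadsWord, T3_one_of_lt hTx, T3_one_of_ge hx]; ring⟩
  · have hx := not_lt.1 hx₀
    exact ⟨sturmianLetter_of_ge hx, T3_one_of_ge hx⟩

end Sturmian

section Equivalence

variable {ε l c : ℝ}

theorem zero_mem_Ico_left (hl : l ≤ 1) (h0 : 0 ∈ Ico c (c + l)) : 0 ∈ Ico c (c + 1) :=
  ⟨h0.1, h0.2.trans_le (by gcongr)⟩

theorem zero_mem_Ico_right (hl : l ≤ 1) (h0 : 0 ∈ Ico c (c + l)) :
    0 ∈ Ico (c + l - 1) (c + l - 1 + 1) :=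
  ⟨by linarith [h0.1], by rw [sub_add_cancel]; exact h0.2⟩

namespace Scaling

variable {S S₁ S₂ : Scaling ε}

theorem Renormalizes.of_hom_eq (hS : S₁.Renormalizes l c) (hom_eq : S₁.hom = S₂.hom) :
    S₂.Renormalizes l c := by
  unfold Renormalizes
  rwa [← hom_eq]

/-- The ratios of both scalings are units of `lattice ε`, and such units in `(0, 1)` are
commensurable. -/
theorem exists_pow_hom_eq {c₁ c₂ : ℝ} (h : IsExchange ε 1) (h₁ : 0 ∈ Ico c₁ (c₁ + 1))
    (h₂ : 0 ∈ Ico c₂ (c₂ + 1)) (hS₁ : S₁.Renormalizes 1 c₁) (hS₂ : S₂.Renormalizes 1 c₂) :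
    ∃ (p : ℕ) (hp : p ≠ 0) (q : ℕ) (hq : q ≠ 0), (S₁.pow p hp).hom = (S₂.pow q hq).hom := by
  obtain ⟨p, hp, q, hq, hpq⟩ := exists_pow_eq_pow h.irrational ⟨S₁.ratio_pos, S₁.ratio_lt_one⟩
    ⟨S₂.ratio_pos, S₂.ratio_lt_one⟩
    ((hS₁.avoids h h₁).1.mul_mem_lattice_iff h (Ico_subset_Icc_self h₁))
    ((hS₂.avoids h h₂).1.mul_mem_lattice_iff h (Ico_subset_Icc_self h₂))
  refine ⟨p, hp, q, hq, AddMonoidHom.ext fun z => val_injective h.irrational ?_⟩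
  exact ((S₁.pow p hp).val_hom z).trans
    ((congrArg (· * val ε z) hpq).trans ((S₂.pow q hq).val_hom z).symm)

theorem Renormalizes.pow_two_sturmian (h : IsExchange ε l) (h0 : 0 ∈ Ico c (c + l))
    (hl : l ∉ lattice ε) (hS : S.Renormalizes l c) :
    (S.pow 2 two_ne_zero).Renormalizes 1 c ∧ (S.pow 2 two_ne_zero).Renormalizes 1 (c + l - 1) := by
  obtain ⟨hc, hcl⟩ := hS.avoids h h0
  obtain ⟨hc₂, hcl₂⟩ := (hS.pow 2 two_ne_zero).avoids h h0
  have hcoset {A : ℝ} (hA : A = c ∨ A = c + l) (x : ℝ) (hx : S.ratio ^ 2 * x - A ∈ lattice ε) :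
      x - A ∈ lattice ε := hc.sub_mem_lattice h (Ico_subset_Icc_self h0) hl hcl hA hx
  have hleft := hc₂.sturmian_left h hl (hcoset (.inl rfl))
  have hright := hcl₂.sturmian_right h hl (hcoset (.inr rfl))
  have h₁ := zero_mem_Ico_left h.length_le_one h0
  have h₂ := zero_mem_Ico_right h.length_le_one h0
  refine ⟨renormalizes_of_avoids h.one h₁ hleft
    ((avoids_one_iff h.one (Ico_subset_Icc_self h₁)).1 hleft), renormalizes_of_avoids h.one h₂
      ((avoids_one_iff h.one (Ico_subset_Icc_self h₂)).2 ?_) ?_⟩ <;>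
  rwa [sub_add_cancel]

theorem renormalizes_of_sturmian (h : IsExchange ε l) (h0 : 0 ∈ Ico c (c + l))
    (hS₁ : S.Renormalizes 1 c) (hS₂ : S.Renormalizes 1 (c + l - 1)) : S.Renormalizes l c := by
  have hleft := (hS₁.avoids h.one (zero_mem_Ico_left h.length_le_one h0)).1
  have hright := (hS₂.avoids h.one (zero_mem_Ico_right h.length_le_one h0)).2
  rw [sub_add_cancel] at hright
  exact renormalizes_of_avoids h h0 (hleft.of_sturmian_left h (Ico_subset_Icc_self h0))
    (hright.of_sturmian_right h (Ico_subset_Icc_self h0))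

end Scaling

theorem exists_renormalizes_iff_sturmian (h : IsExchange ε l) (h0 : 0 ∈ Ico c (c + l))
    (hl : l ∉ lattice ε) :
    (∃ S : Scaling ε, S.Renormalizes l c) ↔
      (∃ S : Scaling ε, S.Renormalizes 1 c) ∧ ∃ S : Scaling ε, S.Renormalizes 1 (c + l - 1) := by
  constructor
  · rintro ⟨S, hS⟩
    obtain ⟨hleft, hright⟩ := hS.pow_two_sturmian h h0 hl
    exact ⟨⟨_, hleft⟩, ⟨_, hright⟩⟩
  · rintro ⟨⟨S₁, hS₁⟩, ⟨S₂, hS₂⟩⟩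
    obtain ⟨p, hp, q, hq, hpq⟩ := Scaling.exists_pow_hom_eq h.one
      (zero_mem_Ico_left h.length_le_one h0) (zero_mem_Ico_right h.length_le_one h0) hS₁ hS₂
    exact ⟨_, Scaling.renormalizes_of_sturmian h h0 ((hS₁.pow p hp).of_hom_eq hpq) (hS₂.pow q hq)⟩

end Equivalence

end ThreeIet

theorem threeIet_subst_invariant_iff_sturmian_images (ε l c : ℝ)
    (hε : Irrational ε) (hεm : ε ∈ Set.Ioo (0 : ℝ) 1)
    (hl₁ : max ε (1 - ε) < l) (hl₂ : l < 1) (hc₁ : c ≤ 0) (hc₂ : 0 < c + l)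
    (hnd : l ∉ Zbr ε) :
    (∃ φ : Fin 3 → List (Fin 3), (∀ a, φ a ≠ []) ∧ IsPrimitiveSubst φ ∧
        IsFixedPointSubst φ (threeIetWordN ε l c)) ↔
    ((∀ v : ℕ → Fin 2, IsConcatImage sigma01 (threeIetWordN ε l c) v →
        ∃ ψ : Fin 2 → List (Fin 2), (∀ a, ψ a ≠ []) ∧ (¬ ∀ a, ψ a = [a]) ∧
          IsFixedPointSubst ψ v) ∧
     (∀ v : ℕ → Fin 2, IsConcatImage sigma10 (threeIetWordN ε l c) v →
        ∃ ψ : Fin 2 → List (Fin 2), (∀ a, ψ a ≠ []) ∧ (¬ ∀ a, ψ a = [a]) ∧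
          IsFixedPointSubst ψ v)) := by
  have h : ThreeIet.IsExchange ε l :=
    ⟨hε, hεm.1, hεm.2, (max_lt_iff.1 hl₁).1, (max_lt_iff.1 hl₁).2, hl₂.le⟩
  have h0 : 0 ∈ Set.Ico c (c + l) := ⟨hc₁, hc₂⟩
  have hl : l ∉ ThreeIet.lattice ε := mt ThreeIet.mem_lattice_iff.1 hnd
  rw [ThreeIet.exists_primitive_subst_iff h h0 hl,
    ThreeIet.exists_renormalizes_iff_sturmian h h0 hl,
    ← ThreeIet.exists_subst_sturmianWord_iff h.one (ThreeIet.zero_mem_Ico_left hl₂.le h0),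
    ← ThreeIet.exists_subst_sturmianWord_iff h.one (ThreeIet.zero_mem_Ico_right hl₂.le h0),
    ThreeIet.IsConcatImage.forall_iff (by decide) (ThreeIet.isConcatImage_sigma01 h h0),
    ThreeIet.IsConcatImage.forall_iff (by decide) (ThreeIet.isConcatImage_sigma10 h h0)]
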